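/- arXiv:2108.13379 — 4 statements merged into one kernel-verified Lean document; each statement's English description precedes it below -/
import Mathlib

section
/- (Localized weighted Hardy inequality.) Let 0 ≤ α ≤ 2, μ₁ > −1, μ₂ > 0, t ≥ 0, and 0 ≤ R₁ < R₂ ≤ ∞. Set n(q) := (1+|q|)^{μ₂} for q ≥ 0 and n(q) := (1+|q|)^{−1−μ₁} for q < 0. There exists a constant C depending only on μ₁ and μ₂ such that for every C¹ function ξ on ℝ³ (additionally assumed compactly supported when R₂ = ∞): ∫_{{|x|=R₁}} n(R₁−t) ξ² (1+t+R₁)^{−α} dσ + ∫_{{min(R₁,t) ≤ |x| ≤ min(R₂,t)}} ξ² (1+|q|)^{−2−μ₁} (1+s)^{−α} dx + ∫_{{max(R₁,t) ≤ |x| ≤ max(R₂,t)}} ξ² (1+|q|)^{−1+μ₂} (1+s)^{−α} dx ≤ C [ ∫_{{|x|=R₂}} n(R₂−t) ξ² (1+t+R₂)^{−α} dσ + ∫_{{min(R₁,t) ≤ |x| ≤ min(R₂,t)}} |∂_r ξ|² (1+|q|)^{−μ₁} (1+s)^{−α} dx + ∫_{{max(R₁,t) ≤ |x| ≤ max(R₂,t)}}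 |∂_r ξ|² (1+|q|)^{1+μ₂} (1+s)^{−α} dx ], where q = |x| − t, s = |x| + t, ∂_r is the radial derivative, dσ is the surface measure on the sphere, and when R₂ = ∞ the sphere integral on the right-hand side is omitted. -/
open MeasureTheory
open scoped ENNReal

/-- The Hardy weight `n(q)`: `(1+|q|)^{μ₂}` for `q ≥ 0` and `(1+|q|)^{−1−μ₁}` for `q < 0`. -/
noncomputable def nwt (μ₁ μ₂ q : ℝ) : ℝ :=
  if 0 ≤ q then (1 + |q|) ^ μ₂ else (1 + |q|) ^ (-1 - μ₁)

/-- The radial derivative `∂_r ξ = (x^i/|x|) ∂_i ξ`. -/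
noncomputable def radialDeriv (ξ : EuclideanSpace ℝ (Fin 3) → ℝ)
    (x : EuclideanSpace ℝ (Fin 3)) : ℝ :=
  fderiv ℝ ξ x (‖x‖⁻¹ • x)

/-!
In polar coordinates the inequality reduces to a one-dimensional one on each ray. Writing
`q = r - t`, `s = r + t` and `N(q)` for the weight `nwt`, one has `2 κ N ≤ (1 + |q|) N'` for a small
`κ > 0`, while `r ^ n (1 + s) ^ (-α)` is nondecreasing for `α ≤ n`. Hence
`u = r ^ n N(q) (1 + s) ^ (-α)` and `ρ = (1 + |q|) / κ` satisfy `2 u ≤ ρ u'`, and expanding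
`(u / ρ) (f + ρ f') ^ 2 ≥ 0` gives `(u / ρ) f ^ 2 - u ρ f' ^ 2 ≤ (u f ^ 2)'`, which is integrated
along the ray.

The sphere terms use the Hausdorff measure, whereas polar coordinates produce the cone measure on
the unit sphere. Both are Ahlfors regular of the same dimension, hence comparable, which only
affects the constant.
-/

open Set Metric Filter Topology Measure
open Module (finrank)
open scoped Pointwise NNReal

section AhlforsRegular

variable {X : Type*} [MetricSpace X] [MeasurableSpace X] [BorelSpace X] {ν : Measure X} {d : ℝ}

theorem measure_le_smul_hausdorffMeasure (hd : 0 < d) {K : ℝ≥0∞} (hK₀ : K ≠ 0) (hK : K ≠ ∞)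
    (hν : ∀ x, ∀ r : ℝ, 0 < r → r ≤ 1 → ν (closedBall x r) ≤ K * ENNReal.ofReal r ^ d) :
    ν ≤ K • μH[d] := by
  have measure_le_ediam (s : Set X) (hs : ediam s ≤ 1) : ν s ≤ K * ediam s ^ d := by
    obtain rfl | ⟨x, hx⟩ := s.eq_empty_or_nonempty
    · simp
    have hs_top : ediam s ≠ ∞ := (hs.trans_lt ENNReal.one_lt_top).ne
    have subset_closedBall {r : ℝ} (hr : diam s ≤ r) : s ⊆ closedBall x r := fun y hy =>
      (dist_le_diam_of_mem (isBounded_iff_ediam_ne_top.2 hs_top) hy hx).trans hr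
    obtain h_diam | h_diam := (diam_nonneg (s := s)).eq_or_lt
    · have hlim : Tendsto (fun r : ℝ => K * ENNReal.ofReal r ^ d) (𝓝[>] 0) (𝓝 0) := by
        have : Tendsto (fun r : ℝ => K * ENNReal.ofReal r ^ d) (𝓝 0)
            (𝓝 (K * ENNReal.ofReal 0 ^ d)) :=
          ENNReal.Tendsto.const_mul ((ENNReal.continuous_rpow_const.tendsto _).comp
            (ENNReal.continuous_ofReal.tendsto 0)) (.inr hK)
        simpa [hd] using this.mono_left nhdsWithin_le_nhds
      refine (ge_of_tendsto hlim ?_).trans zero_le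
      filter_upwards [Ioo_mem_nhdsGT one_pos] with r hr
      exact (measure_mono (subset_closedBall (h_diam ▸ hr.1.le))).trans (hν x r hr.1 hr.2.le)
    · rw [← ENNReal.ofReal_toReal hs_top]
      exact (measure_mono (subset_closedBall le_rfl)).trans
        (hν x _ h_diam (ENNReal.toReal_mono ENNReal.one_ne_top hs))
  have h := le_hausdorffMeasure d (K⁻¹ • ν) 1 one_pos fun s hs => by
    rw [Measure.smul_apply, smul_eq_mul, ENNReal.inv_mul_le_iff hK₀ hK]
    exact measure_le_ediam s hs
  calc ν = K • K⁻¹ • ν := by rw [smul_smul, ENNReal.mul_inv_cancel hK₀ hK, one_smul]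
    _ ≤ K • μH[d] := by gcongr

theorem exists_countable_closedBall_cover [TopologicalSpace.SeparableSpace X] (ν : Measure X)
    {U : Set X} (hU : IsOpen U) {ε : ℝ} (hε : 0 < ε) :
    ∃ u : Set (X × ℝ), u.Countable ∧ (∀ p ∈ u, 0 < p.2 ∧ p.2 ≤ ε) ∧
      ∑' p : u, ν (closedBall p.1.1 p.1.2) ≤ ν U ∧
      U ⊆ ⋃ p : u, closedBall p.1.1 (5 * p.1.2) := by
  let 𝓑 : Set (X × ℝ) := {p | 0 < p.2 ∧ p.2 ≤ ε ∧ closedBall p.1 p.2 ⊆ U}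
  obtain ⟨u, hu𝓑, hu_disj, hu_cover⟩ :=
    Vitali.exists_disjoint_subfamily_covering_enlargement_closedBall
      𝓑 Prod.fst Prod.snd ε (fun _ hp => hp.2.1) 5 (by norm_num)
  have hu : u.Countable := hu_disj.countable_of_nonempty_interior fun p hp =>
    ⟨p.1, ball_subset_interior_closedBall (mem_ball_self (hu𝓑 hp).1)⟩
  refine ⟨u, hu, fun p hp => ⟨(hu𝓑 hp).1, (hu𝓑 hp).2.1⟩, ?_, fun x hx => ?_⟩
  · rw [← measure_biUnion hu hu_disj fun _ _ => measurableSet_closedBall]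
    exact measure_mono (iUnion₂_subset fun p hp => (hu𝓑 hp).2.2)
  · obtain ⟨r, hr, hrU⟩ := nhds_basis_closedBall.mem_iff.1 (hU.mem_nhds hx)
    have hmem : (x, min r ε) ∈ 𝓑 :=
      ⟨lt_min hr hε, min_le_right _ _, (closedBall_subset_closedBall (min_le_left _ _)).trans hrU⟩
    obtain ⟨p, hp, hsub⟩ := hu_cover _ hmem
    exact mem_iUnion.2 ⟨⟨p, hp⟩, hsub (mem_closedBall_self hmem.1.le)⟩

theorem hausdorffMeasure_le_of_isOpen [TopologicalSpace.SeparableSpace X] (hd : 0 ≤ d) {K : ℝ≥0∞}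
    (hν : ∀ x, ∀ r : ℝ, 0 < r → r ≤ 1 → ENNReal.ofReal r ^ d ≤ K * ν (closedBall x r))
    {U : Set X} (hU : IsOpen U) : μH[d] U ≤ 10 ^ d * K * ν U := by
  choose u hu_count hu_rad hu_sum hu_cover using
    fun n : ℕ => exists_countable_closedBall_cover ν hU (Nat.one_div_pos_of_nat (α := ℝ) (n := n))
  have ediam_le {n : ℕ} (p : u n) :
      ediam (closedBall p.1.1 (5 * p.1.2)) ≤ 10 * ENNReal.ofReal p.1.2 := by
    have hp := (hu_rad n p p.2).1.le
    rw [← closedEBall_ofReal (by positivity)]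
    refine ediam_closedEBall_le.trans_eq ?_
    rw [ENNReal.ofReal_mul (by norm_num), ← mul_assoc]
    norm_num
  have rad_le_one {n : ℕ} (p : u n) : p.1.2 ≤ 1 := (hu_rad n p p.2).2.trans
    (by simpa using Nat.one_div_le_one_div (α := ℝ) n.zero_le)
  have : ∀ n, Countable (u n) := fun n => (hu_count n).to_subtype
  have hlim : Tendsto (fun n : ℕ => 10 * ENNReal.ofReal (1 / (n + 1))) atTop (𝓝 0) := by
    have := ENNReal.Tendsto.const_mul (a := 10) (ENNReal.tendsto_ofReal
      (tendsto_one_div_add_atTop_nhds_zero_nat (𝕜 := ℝ))) (.inr (by simp))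
    simpa using this
  refine (hausdorffMeasure_le_liminf_tsum d U _ hlim
    (fun n (p : u n) => closedBall p.1.1 (5 * p.1.2))
    (.of_forall fun n p => (ediam_le p).trans (by gcongr; exact (hu_rad n p p.2).2))
    (.of_forall hu_cover)).trans
    (liminf_le_of_le ?_ fun b hb => ?_)
  · isBoundedDefault
  · obtain ⟨n, hn⟩ := hb.exists
    calc b ≤ ∑' p : u n, ediam (closedBall p.1.1 (5 * p.1.2)) ^ d := hn
      _ ≤ ∑' p : u n, 10 ^ d * K * ν (closedBall p.1.1 p.1.2) := by
        refine ENNReal.tsum_le_tsum fun p => ?_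
        calc ediam (closedBall p.1.1 (5 * p.1.2)) ^ d
          _ ≤ (10 * ENNReal.ofReal p.1.2) ^ d := by gcongr; exact ediam_le p
          _ = 10 ^ d * ENNReal.ofReal p.1.2 ^ d := ENNReal.mul_rpow_of_nonneg _ _ hd
          _ ≤ 10 ^ d * (K * ν (closedBall p.1.1 p.1.2)) := by
            gcongr
            exact hν _ _ (hu_rad n p p.2).1 (rad_le_one p)
          _ = 10 ^ d * K * ν (closedBall p.1.1 p.1.2) := (mul_assoc _ _ _).symm
      _ = 10 ^ d * K * ∑' p : u n, ν (closedBall p.1.1 p.1.2) := ENNReal.tsum_mul_left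
      _ ≤ 10 ^ d * K * ν U := by gcongr; exact hu_sum n

theorem hausdorffMeasure_le_smul_measure [TopologicalSpace.SeparableSpace X] [ν.OuterRegular]
    (hd : 0 ≤ d) {K : ℝ≥0∞} (hK₀ : K ≠ 0) (hK : K ≠ ∞)
    (hν : ∀ x, ∀ r : ℝ, 0 < r → r ≤ 1 → ENNReal.ofReal r ^ d ≤ K * ν (closedBall x r)) :
    μH[d] ≤ ((10 : ℝ≥0∞) ^ d * K) • ν := by
  have h₀ : (10 : ℝ≥0∞) ^ d * K ≠ 0 := mul_ne_zero (by simp) hK₀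
  have h_top : (10 : ℝ≥0∞) ^ d * K ≠ ∞ :=
    ENNReal.mul_ne_top (ENNReal.rpow_ne_top_of_nonneg hd (by simp)) hK
  refine Measure.le_iff'.2 fun A => ?_
  rw [Measure.smul_apply, smul_eq_mul, ← ENNReal.inv_mul_le_iff h₀ h_top,
    A.measure_eq_iInf_isOpen ν]
  refine le_iInf₂ fun U hAU => le_iInf fun hU => ?_
  rw [ENNReal.inv_mul_le_iff h₀ h_top]
  exact (measure_mono hAU).trans (hausdorffMeasure_le_of_isOpen hd hν hU)

end AhlforsRegular

section UnitSphere

variable {E : Type*} [NormedAddCommGroup E] [NormedSpace ℝ E]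

theorem cone_closedBall_subset {r : ℝ} (hr : 0 < r) (x : sphere (0 : E) 1) :
    Ioo (0 : ℝ) 1 • ((↑) '' closedBall x r : Set E) ⊆
      ⋃ k ∈ Finset.range ⌈r⁻¹⌉₊, closedBall ((k * r) • (x : E)) (2 * r) := by
  rintro _ ⟨ρ, ⟨hρ₀, hρ₁⟩, _, ⟨w, hw, rfl⟩, rfl⟩
  have hx : ‖(x : E)‖ = 1 := norm_eq_of_mem_sphere x
  have h_floor_le : ⌊ρ / r⌋₊ * r ≤ ρ := (le_div_iff₀ hr).1 (Nat.floor_le (by positivity))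
  have h_lt_floor : ρ < (⌊ρ / r⌋₊ + 1) * r := (div_lt_iff₀ hr).1 (Nat.lt_floor_add_one _)
  have hk : ⌊ρ / r⌋₊ < ⌈r⁻¹⌉₊ := by
    rw [Nat.floor_lt (by positivity)]
    calc ρ / r < 1 / r := by gcongr
      _ ≤ ⌈r⁻¹⌉₊ := one_div r ▸ Nat.le_ceil _
  refine mem_biUnion (Finset.mem_range.2 hk) (mem_closedBall_iff_norm.2 ?_)
  calc ‖ρ • (w : E) - (⌊ρ / r⌋₊ * r) • (x : E)‖
    _ = ‖ρ • (w - x : E) + (ρ - ⌊ρ / r⌋₊ * r) • (x : E)‖ := by congr 1; module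
    _ ≤ ‖ρ • (w - x : E)‖ + ‖(ρ - ⌊ρ / r⌋₊ * r) • (x : E)‖ := norm_add_le _ _
    _ = ρ * ‖(w - x : E)‖ + (ρ - ⌊ρ / r⌋₊ * r) := by
      rw [norm_smul, norm_smul, hx, Real.norm_of_nonneg hρ₀.le,
        Real.norm_of_nonneg (sub_nonneg.2 h_floor_le), mul_one]
    _ ≤ 1 * r + r := by
      gcongr
      · exact mem_closedBall_iff_norm.1 hw
      · linarith
    _ = 2 * r := by ring

theorem norm_inv_norm_smul_sub_le {x y : E} (hx : ‖x‖ = 1) (hy : y ≠ 0) {c : ℝ} (hc : 0 ≤ c) :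
    ‖‖y‖⁻¹ • y - x‖ ≤ 2 * ‖y - c • x‖ / ‖y‖ := by
  have hy' : 0 < ‖y‖ := norm_pos_iff.2 hy
  have hcx : ‖c • x‖ = c := by rw [norm_smul, hx, mul_one, Real.norm_of_nonneg hc]
  rw [le_div_iff₀' hy']
  calc ‖y‖ * ‖‖y‖⁻¹ • y - x‖ = ‖(y - c • x) + (c - ‖y‖) • x‖ := by
        rw [← norm_smul_of_nonneg hy'.le, smul_sub, smul_inv_smul₀ hy'.ne']
        congr 1
        module
    _ ≤ ‖y - c • x‖ + ‖(c - ‖y‖) • x‖ := norm_add_le _ _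
    _ = ‖y - c • x‖ + |‖c • x‖ - ‖y‖| := by rw [norm_smul, hx, mul_one, hcx, Real.norm_eq_abs]
    _ ≤ ‖y - c • x‖ + ‖c • x - y‖ := by gcongr; exact abs_norm_sub_norm_le _ _
    _ = 2 * ‖y - c • x‖ := by rw [norm_sub_rev (c • x)]; ring

theorem ball_subset_cone_closedBall {r c : ℝ} (hr₁ : r ≤ 1) (hc : 1 / 2 ≤ c)
    (hcr : c + r / 8 ≤ 1) (x : sphere (0 : E) 1) :
    ball (c • (x : E)) (r / 8) ⊆ Ioo (0 : ℝ) 1 • ((↑) '' closedBall x r : Set E) := by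
  intro y hy
  rw [mem_ball_iff_norm] at hy
  have hx : ‖(x : E)‖ = 1 := norm_eq_of_mem_sphere x
  have hcx : ‖c • (x : E)‖ = c := by
    rw [norm_smul, hx, mul_one, Real.norm_of_nonneg (by linarith)]
  obtain ⟨h_lower, h_upper⟩ := abs_lt.1 ((abs_norm_sub_norm_le y (c • (x : E))).trans_lt hy)
  rw [hcx] at h_lower h_upper
  have hy_lt : ‖y‖ < 1 := by linarith
  have hy₀ : y ≠ 0 := norm_pos_iff.1 (by linarith)
  have hdist : ‖‖y‖⁻¹ • y - x‖ ≤ r := by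
    refine (norm_inv_norm_smul_sub_le hx hy₀ (by linarith : 0 ≤ c)).trans ?_
    rw [div_le_iff₀ (norm_pos_iff.2 hy₀)]
    nlinarith [norm_nonneg (y - c • (x : E))]
  exact ⟨‖y‖, ⟨norm_pos_iff.2 hy₀, hy_lt⟩, ‖y‖⁻¹ • y,
    ⟨⟨‖y‖⁻¹ • y, by simp [norm_smul, hy₀]⟩, mem_closedBall_iff_norm.2 hdist, rfl⟩,
    smul_inv_smul₀ (norm_ne_zero_iff.2 hy₀) y⟩

theorem pairwise_disjoint_ball_smul {x : E} (hx : ‖x‖ = 1) (a : ℝ) {δ : ℝ} (hδ : 0 ≤ δ) :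
    Pairwise (Function.onFun Disjoint fun k : ℕ => ball ((a + k * (2 * δ)) • x) δ) := by
  intro j k hjk
  refine ball_disjoint_ball ?_
  have hjk' : (1 : ℝ) ≤ |(j : ℝ) - k| := by
    exact_mod_cast Int.one_le_abs (sub_ne_zero.2 (Nat.cast_injective.ne hjk : (j : ℤ) ≠ k))
  rw [dist_eq_norm, ← sub_smul, norm_smul, hx, mul_one, Real.norm_eq_abs,
    show a + j * (2 * δ) - (a + k * (2 * δ)) = (j - k) * (2 * δ) by ring, abs_mul,
    abs_of_nonneg (by positivity : 0 ≤ 2 * δ)]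
  nlinarith

variable [FiniteDimensional ℝ E] [MeasurableSpace E] [BorelSpace E] (μ : Measure E)
  [μ.IsAddHaarMeasure] {n : ℕ}

theorem toSphere_closedBall_le (hE : finrank ℝ E = n + 1) (x : sphere (0 : E) 1) {r : ℝ}
    (hr₀ : 0 < r) (hr₁ : r ≤ 1) :
    μ.toSphere (closedBall x r) ≤
      (n + 1) * 2 ^ (n + 2) * μ (ball 0 1) * ENNReal.ofReal (r ^ n) := by
  have hceil : ⌈r⁻¹⌉₊ * r ≤ 2 := by
    have := Nat.ceil_lt_add_one (inv_nonneg.2 hr₀.le)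
    nlinarith [inv_mul_cancel₀ hr₀.ne']
  have hcone : μ (Ioo (0 : ℝ) 1 • ((↑) '' closedBall x r : Set E)) ≤
      2 ^ (n + 2) * μ (ball 0 1) * ENNReal.ofReal (r ^ n) := by
    calc μ (Ioo (0 : ℝ) 1 • ((↑) '' closedBall x r : Set E))
      _ ≤ ∑ k ∈ Finset.range ⌈r⁻¹⌉₊, μ (closedBall ((k * r) • (x : E)) (2 * r)) :=
        (measure_mono (cone_closedBall_subset hr₀ x)).trans (measure_biUnion_finset_le _ _)
      _ = ENNReal.ofReal (⌈r⁻¹⌉₊ * (2 * r) ^ (n + 1)) * μ (ball 0 1) := by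
        simp only [addHaar_closedBall μ _ (by positivity : 0 ≤ 2 * r), hE, Finset.sum_const,
          Finset.card_range, nsmul_eq_mul]
        rw [ENNReal.ofReal_mul (by positivity), ENNReal.ofReal_natCast, mul_assoc]
      _ ≤ ENNReal.ofReal (2 ^ (n + 2) * r ^ n) * μ (ball 0 1) := by
        refine mul_le_mul_left (ENNReal.ofReal_le_ofReal ?_) _
        calc ⌈r⁻¹⌉₊ * (2 * r) ^ (n + 1) = ⌈r⁻¹⌉₊ * r * (2 ^ (n + 1) * r ^ n) := by ring
          _ ≤ 2 * (2 ^ (n + 1) * r ^ n) := by gcongr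
          _ = 2 ^ (n + 2) * r ^ n := by ring
      _ = 2 ^ (n + 2) * μ (ball 0 1) * ENNReal.ofReal (r ^ n) := by
        rw [ENNReal.ofReal_mul (by positivity), ENNReal.ofReal_pow zero_le_two,
          ENNReal.ofReal_ofNat]
        ring
  rw [toSphere_apply' μ measurableSet_closedBall, hE]
  push_cast
  calc (n + 1) * μ (Ioo (0 : ℝ) 1 • ((↑) '' closedBall x r : Set E))
    _ ≤ (n + 1) * (2 ^ (n + 2) * μ (ball 0 1) * ENNReal.ofReal (r ^ n)) := by gcongr
    _ = _ := by ring

theorem le_toSphere_closedBall (hE : finrank ℝ E = n + 1) (x : sphere (0 : E) 1) {r : ℝ}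
    (hr₀ : 0 < r) (hr₁ : r ≤ 1) :
    μ (ball 0 1) * ENNReal.ofReal (r ^ n) ≤ 8 ^ (n + 1) * μ.toSphere (closedBall x r) := by
  have hx : ‖(x : E)‖ = 1 := norm_eq_of_mem_sphere x
  have hceil_lt : (⌈r⁻¹⌉₊ : ℝ) * r ≤ 1 + r := by
    have := Nat.ceil_lt_add_one (inv_nonneg.2 hr₀.le)
    nlinarith [inv_mul_cancel₀ hr₀.ne']
  have hle_ceil : 1 ≤ (⌈r⁻¹⌉₊ : ℝ) * r := (inv_le_iff_one_le_mul₀ hr₀).1 (Nat.le_ceil _)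
  let B : ℕ → Set E := fun k => ball ((1 / 2 + k * (2 * (r / 8))) • (x : E)) (r / 8)
  have hsubset : ⋃ k ∈ Finset.range ⌈r⁻¹⌉₊, B k ⊆
      Ioo (0 : ℝ) 1 • ((↑) '' closedBall x r : Set E) := by
    refine iUnion₂_subset fun k hk => ball_subset_cone_closedBall hr₁ ?_ ?_ x
    · exact le_add_of_nonneg_right (by positivity)
    · have : (k : ℝ) + 1 ≤ ⌈r⁻¹⌉₊ := by exact_mod_cast Finset.mem_range.1 hk
      nlinarith
  calc μ (ball 0 1) * ENNReal.ofReal (r ^ n)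
    _ ≤ μ (ball 0 1) * ENNReal.ofReal (8 ^ (n + 1) * (⌈r⁻¹⌉₊ * (r / 8) ^ (n + 1))) := by
      refine mul_le_mul_right (ENNReal.ofReal_le_ofReal ?_) _
      calc r ^ n ≤ ⌈r⁻¹⌉₊ * r * r ^ n := le_mul_of_one_le_left (by positivity) hle_ceil
        _ = 8 ^ (n + 1) * (⌈r⁻¹⌉₊ * (r / 8) ^ (n + 1)) := by rw [div_pow]; field_simp; ring
    _ = 8 ^ (n + 1) * ∑ k ∈ Finset.range ⌈r⁻¹⌉₊, μ (B k) := by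
      simp only [B, addHaar_ball_of_pos μ _ (by positivity : 0 < r / 8), hE, Finset.sum_const,
        Finset.card_range, nsmul_eq_mul]
      rw [ENNReal.ofReal_mul (by positivity), ENNReal.ofReal_mul (by positivity),
        ENNReal.ofReal_natCast, ENNReal.ofReal_pow (by norm_num), ENNReal.ofReal_ofNat]
      ring
    _ = 8 ^ (n + 1) * μ (⋃ k ∈ Finset.range ⌈r⁻¹⌉₊, B k) := by
      rw [measure_biUnion_finset ((pairwise_disjoint_ball_smul hx _ (by positivity)).set_pairwise _)
        fun _ _ => measurableSet_ball]
    _ ≤ 8 ^ (n + 1) * (finrank ℝ E * μ (Ioo (0 : ℝ) 1 • ((↑) '' closedBall x r : Set E))) := by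
      gcongr
      refine (measure_mono hsubset).trans (le_mul_of_one_le_left' ?_)
      exact_mod_cast hE ▸ Nat.le_add_left 1 n
    _ = 8 ^ (n + 1) * μ.toSphere (closedBall x r) := by
      rw [toSphere_apply' μ measurableSet_closedBall]

theorem exists_toSphere_le_smul_hausdorffMeasure (hE : finrank ℝ E = n + 1) (hn : 0 < n) :
    ∃ K : ℝ≥0, μ.toSphere ≤ K • μH[n] := by
  have hK : (n + 1) * 2 ^ (n + 2) * μ (ball 0 1) ≠ ∞ := by finiteness
  have hK₀ : (n + 1) * 2 ^ (n + 2) * μ (ball 0 1) ≠ 0 :=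
    mul_ne_zero (by positivity) (measure_ball_pos μ 0 one_pos).ne'
  lift (n + 1) * 2 ^ (n + 2) * μ (ball 0 1) to ℝ≥0 using hK with K hK_eq
  refine ⟨K, measure_le_smul_hausdorffMeasure (Nat.cast_pos.2 hn) hK₀ ENNReal.coe_ne_top
    fun x r hr₀ hr₁ => ?_⟩
  rw [hK_eq, ENNReal.rpow_natCast, ← ENNReal.ofReal_pow hr₀.le]
  exact toSphere_closedBall_le μ hE x hr₀ hr₁

theorem exists_hausdorffMeasure_le_smul_toSphere (hE : finrank ℝ E = n + 1) :
    ∃ K : ℝ≥0, μH[n] ≤ K • μ.toSphere := by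
  have hb₀ : μ (ball 0 1) ≠ 0 := (measure_ball_pos μ 0 one_pos).ne'
  have hb : μ (ball 0 1) ≠ ∞ := measure_ball_lt_top.ne
  have hK : (μ (ball 0 1))⁻¹ * 8 ^ (n + 1) ≠ ∞ := by finiteness
  have hK₀ : (μ (ball 0 1))⁻¹ * 8 ^ (n + 1) ≠ 0 :=
    mul_ne_zero (ENNReal.inv_ne_zero.2 hb) (by positivity)
  have h := hausdorffMeasure_le_smul_measure (ν := μ.toSphere) (Nat.cast_nonneg n) hK₀ hK
    fun x r hr₀ hr₁ => by
      rw [ENNReal.rpow_natCast, ← ENNReal.ofReal_pow hr₀.le, mul_assoc,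
        ← ENNReal.mul_le_iff_le_inv hb₀ hb]
      exact le_toSphere_closedBall μ hE x hr₀ hr₁
  have hC : (10 : ℝ≥0∞) ^ (n : ℝ) * ((μ (ball 0 1))⁻¹ * 8 ^ (n + 1)) ≠ ∞ :=
    ENNReal.mul_ne_top (by simp) hK
  lift (10 : ℝ≥0∞) ^ (n : ℝ) * ((μ (ball 0 1))⁻¹ * 8 ^ (n + 1)) to ℝ≥0 using hC with C
  exact ⟨C, h⟩

theorem exists_toSphere_hausdorffMeasure_comparable (hE : finrank ℝ E = n + 1) (hn : 0 < n) :
    ∃ K : ℝ≥0, 1 ≤ K ∧ μ.toSphere ≤ K • μH[n] ∧ μH[n] ≤ K • μ.toSphere := by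
  obtain ⟨K₁, hK₁⟩ := exists_toSphere_le_smul_hausdorffMeasure μ hE hn
  obtain ⟨K₂, hK₂⟩ := exists_hausdorffMeasure_le_smul_toSphere μ hE
  refine ⟨max 1 (max K₁ K₂), le_max_left _ _, hK₁.trans ?_, hK₂.trans ?_⟩
  · gcongr; exact (le_max_left _ _).trans (le_max_right _ _)
  · gcongr; exact (le_max_right _ _).trans (le_max_right _ _)

end UnitSphere

section SphereRadius

variable {E : Type*} [NormedAddCommGroup E] [NormedSpace ℝ E] [MeasurableSpace E] [BorelSpace E]
  {n : ℕ}

theorem hausdorffMeasure_restrict_sphere {R : ℝ} (hR : 0 < R) :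
    (μH[n] : Measure E).restrict (sphere 0 R) =
      ENNReal.ofReal (R ^ n) • map (fun w : sphere (0 : E) 1 => R • (w : E)) μH[n] := by
  ext A hA
  have himage : A ∩ sphere 0 R =
      R • ((↑) '' ((fun w : sphere (0 : E) 1 => R • (w : E)) ⁻¹' A)) := by
    ext y
    rw [mem_smul_set_iff_inv_smul_mem₀ hR.ne']
    simp [norm_smul, abs_of_pos hR, smul_inv_smul₀ hR.ne', inv_mul_eq_one₀ hR.ne', eq_comm,
      and_comm]
  rw [restrict_apply hA, himage, hausdorffMeasure_smul₀ n.cast_nonneg hR.ne',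
    isometry_subtype_coe.hausdorffMeasure_image (.inl n.cast_nonneg), Measure.smul_apply,
    map_apply (by fun_prop) hA, NNReal.rpow_natCast, ENNReal.smul_def, ENNReal.coe_pow,
    ENNReal.ofReal_pow hR.le, ← enorm_eq_nnnorm, Real.enorm_of_nonneg hR.le]

theorem lintegral_sphere_hausdorffMeasure (hn : 0 < n) {R : ℝ} (hR : 0 ≤ R) {g : E → ℝ≥0∞}
    (hg : Measurable g) :
    ∫⁻ x in sphere 0 R, g x ∂μH[n] =
      ENNReal.ofReal (R ^ n) * ∫⁻ w : sphere (0 : E) 1, g (R • (w : E)) ∂μH[n] := by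
  obtain rfl | hR := hR.eq_or_lt
  · have := nullSingletonClass_hausdorff E (d := n) (by positivity)
    simp [hn.ne']
  · rw [hausdorffMeasure_restrict_sphere hR, lintegral_smul_measure, lintegral_map hg (by fun_prop),
      smul_eq_mul]

end SphereRadius

section PolarCoordinates

variable {E : Type*} [NormedAddCommGroup E] [NormedSpace ℝ E] [FiniteDimensional ℝ E]
  [MeasurableSpace E] [BorelSpace E] (μ : Measure E) [μ.IsAddHaarMeasure] {n : ℕ}

theorem lintegral_eq_lintegral_toSphere (hE : finrank ℝ E = n + 1) {g : E → ℝ≥0∞}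
    (hg : Measurable g) :
    ∫⁻ x, g x ∂μ =
      ∫⁻ w, (∫⁻ r in Ioi (0 : ℝ), ENNReal.ofReal (r ^ n) * g (r • (w : E))) ∂μ.toSphere := by
  have : Nontrivial E := Module.nontrivial_of_finrank_pos (R := ℝ) (by omega)
  have hpres := (measurePreserving_homeomorphUnitSphereProd μ).symm
    (homeomorphUnitSphereProd E).toMeasurableEquiv
  have hg' : Measurable fun x : ({0}ᶜ : Set E) => g x := by fun_prop
  have hn : finrank ℝ E - 1 = n := by omega
  calc ∫⁻ x, g x ∂μ = ∫⁻ x : ({0}ᶜ : Set E), g x ∂μ.comap (↑) := by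
        rw [lintegral_subtype_comap (measurableSet_singleton _).compl, restrict_compl_singleton]
    _ = ∫⁻ p, g ((homeomorphUnitSphereProd E).symm p) ∂μ.toSphere.prod (volumeIoiPow n) := by
        rw [← hn, ← hpres.lintegral_comp hg']; rfl
    _ = ∫⁻ w, (∫⁻ r : Ioi (0 : ℝ), g ((r : ℝ) • (w : E)) ∂volumeIoiPow n) ∂μ.toSphere :=
        lintegral_prod _ (by fun_prop)
    _ = _ := lintegral_congr fun w => by
        rw [volumeIoiPow, lintegral_withDensity_eq_lintegral_mul₀ (by fun_prop) (by fun_prop),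
          ← lintegral_subtype_comap measurableSet_Ioi
            fun r => ENNReal.ofReal (r ^ n) * g (r • (w : E))]
        rfl

theorem setLIntegral_norm_preimage_Icc (hE : finrank ℝ E = n + 1) {g : E → ℝ≥0∞}
    (hg : Measurable g) {a b : ℝ} (ha : 0 ≤ a) :
    ∫⁻ x in norm ⁻¹' Icc a b, g x ∂μ =
      ∫⁻ w, (∫⁻ r in Icc a b, ENNReal.ofReal (r ^ n) * g (r • (w : E))) ∂μ.toSphere := by
  have hS : MeasurableSet (norm ⁻¹' Icc a b : Set E) := measurable_norm measurableSet_Icc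
  rw [← lintegral_indicator hS, lintegral_eq_lintegral_toSphere μ hE (hg.indicator hS)]
  refine lintegral_congr fun w => ?_
  have hw : ‖(w : E)‖ = 1 := norm_eq_of_mem_sphere w
  have hinter : Icc a b ∩ Ici 0 = Icc a b := inter_eq_left.2 fun r hr => ha.trans hr.1
  calc ∫⁻ r in Ioi (0 : ℝ), ENNReal.ofReal (r ^ n) * (norm ⁻¹' Icc a b).indicator g (r • (w : E))
    _ = ∫⁻ r in Ioi (0 : ℝ),
          (Icc a b).indicator (fun r => ENNReal.ofReal (r ^ n) * g (r • (w : E))) r := by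
        refine setLIntegral_congr_fun measurableSet_Ioi fun r (hr : 0 < r) => ?_
        simp [indicator, norm_smul, hw, abs_of_pos hr]
    _ = ∫⁻ r in Icc a b, ENNReal.ofReal (r ^ n) * g (r • (w : E)) := by
        rw [restrict_congr_set Ioi_ae_eq_Ici, setLIntegral_indicator measurableSet_Icc, hinter]

end PolarCoordinates

section OneDimensional

variable {a b : ℝ} {u u' ρ f f' : ℝ → ℝ}

theorem integral_weighted_hardy (hab : a ≤ b) (hu : ContinuousOn u (Icc a b))
    (hρ : ContinuousOn ρ (Icc a b)) (hf : ContinuousOn f (Icc a b))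
    (hf' : ContinuousOn f' (Icc a b)) (hu₀ : ∀ x ∈ Icc a b, 0 ≤ u x)
    (hρ₀ : ∀ x ∈ Icc a b, 0 < ρ x)
    (hderiv_u : ∀ x ∈ Ioo a b, HasDerivWithinAt u (u' x) (Ioi x) x)
    (hderiv_f : ∀ x ∈ Ioo a b, HasDerivWithinAt f (f' x) (Ioi x) x)
    (hu' : ∀ x ∈ Ioo a b, 2 * u x ≤ ρ x * u' x) :
    u a * f a ^ 2 + ∫ x in a..b, u x / ρ x * f x ^ 2 ≤
      u b * f b ^ 2 + ∫ x in a..b, u x * ρ x * f' x ^ 2 := by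
  have hcont₁ : ContinuousOn (fun x => u x / ρ x * f x ^ 2) (Icc a b) :=
    (hu.div hρ fun x hx => (hρ₀ x hx).ne').mul (hf.pow 2)
  have hcont₂ : ContinuousOn (fun x => u x * ρ x * f' x ^ 2) (Icc a b) :=
    (hu.mul hρ).mul (hf'.pow 2)
  have hderiv : ∀ x ∈ Ioo a b, HasDerivWithinAt (fun x => u x * f x ^ 2)
      (u' x * f x ^ 2 + u x * (2 * f x * f' x)) (Ioi x) x := fun x hx => by
    simpa using (hderiv_u x hx).fun_mul ((hderiv_f x hx).fun_pow 2)
  have hle : ∀ x ∈ Ioo a b, u x / ρ x * f x ^ 2 - u x * ρ x * f' x ^ 2 ≤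
      u' x * f x ^ 2 + u x * (2 * f x * f' x) := fun x hx => by
    have hux := hu₀ x (Ioo_subset_Icc_self hx)
    have hρx := hρ₀ x (Ioo_subset_Icc_self hx)
    have hu'_ge : 2 * (u x / ρ x) ≤ u' x := by
      rw [← mul_div_assoc, div_le_iff₀' hρx]
      exact hu' x hx
    have hsq : 0 ≤ u x / ρ x * (f x + ρ x * f' x) ^ 2 := by positivity
    have hexpand : u x / ρ x * (f x + ρ x * f' x) ^ 2 =
        u x / ρ x * f x ^ 2 + 2 * u x * f x * f' x + u x * ρ x * f' x ^ 2 := by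
      field_simp
      ring
    nlinarith [mul_le_mul_of_nonneg_right hu'_ge (sq_nonneg (f x))]
  have h : ∫ x in a..b, (u x / ρ x * f x ^ 2 - u x * ρ x * f' x ^ 2) ≤
      u b * f b ^ 2 - u a * f a ^ 2 :=
    intervalIntegral.integral_le_sub_of_hasDeriv_right_of_le hab (hu.mul (hf.pow 2)) hderiv
      (hcont₁.sub hcont₂).integrableOn_Icc hle
  rw [intervalIntegral.integral_sub (hcont₁.intervalIntegrable_of_Icc hab)
    (hcont₂.intervalIntegrable_of_Icc hab)] at h
  linarith

theorem setLIntegral_Icc_ofReal (hab : a ≤ b) (hf : ContinuousOn f (Icc a b))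
    (hf₀ : ∀ x ∈ Icc a b, 0 ≤ f x) :
    ∫⁻ x in Icc a b, ENNReal.ofReal (f x) = ENNReal.ofReal (∫ x in a..b, f x) := by
  rw [intervalIntegral.integral_of_le hab, ← integral_Icc_eq_integral_Ioc,
    ofReal_integral_eq_lintegral_ofReal hf.integrableOn_Icc
      (ae_restrict_of_forall_mem measurableSet_Icc hf₀)]

theorem setLIntegral_weighted_hardy (hab : a ≤ b) (hu : ContinuousOn u (Icc a b))
    (hρ : ContinuousOn ρ (Icc a b)) (hf : ContinuousOn f (Icc a b))
    (hf' : ContinuousOn f' (Icc a b)) (hu₀ : ∀ x ∈ Icc a b, 0 ≤ u x)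
    (hρ₀ : ∀ x ∈ Icc a b, 0 < ρ x)
    (hderiv_u : ∀ x ∈ Ioo a b, HasDerivWithinAt u (u' x) (Ioi x) x)
    (hderiv_f : ∀ x ∈ Ioo a b, HasDerivWithinAt f (f' x) (Ioi x) x)
    (hu' : ∀ x ∈ Ioo a b, 2 * u x ≤ ρ x * u' x) :
    ENNReal.ofReal (u a * f a ^ 2) + ∫⁻ x in Icc a b, ENNReal.ofReal (u x / ρ x * f x ^ 2) ≤
      ENNReal.ofReal (u b * f b ^ 2) +
        ∫⁻ x in Icc a b, ENNReal.ofReal (u x * ρ x * f' x ^ 2) := by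
  have hnonneg₁ : ∀ x ∈ Icc a b, 0 ≤ u x / ρ x * f x ^ 2 := fun x hx =>
    mul_nonneg (div_nonneg (hu₀ x hx) (hρ₀ x hx).le) (sq_nonneg _)
  have hnonneg₂ : ∀ x ∈ Icc a b, 0 ≤ u x * ρ x * f' x ^ 2 := fun x hx =>
    mul_nonneg (mul_nonneg (hu₀ x hx) (hρ₀ x hx).le) (sq_nonneg _)
  have hcont₁ : ContinuousOn (fun x => u x / ρ x * f x ^ 2) (Icc a b) :=
    (hu.div hρ fun x hx => (hρ₀ x hx).ne').mul (hf.pow 2)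
  have hcont₂ : ContinuousOn (fun x => u x * ρ x * f' x ^ 2) (Icc a b) :=
    (hu.mul hρ).mul (hf'.pow 2)
  rw [setLIntegral_Icc_ofReal hab hcont₁ hnonneg₁, setLIntegral_Icc_ofReal hab hcont₂ hnonneg₂,
    ← ENNReal.ofReal_add (mul_nonneg (hu₀ a (left_mem_Icc.2 hab)) (sq_nonneg _))
      (intervalIntegral.integral_nonneg hab hnonneg₁),
    ← ENNReal.ofReal_add (mul_nonneg (hu₀ b (right_mem_Icc.2 hab)) (sq_nonneg _))
      (intervalIntegral.integral_nonneg hab hnonneg₂)]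
  exact ENNReal.ofReal_le_ofReal
    (integral_weighted_hardy hab hu hρ hf hf' hu₀ hρ₀ hderiv_u hderiv_f hu')

end OneDimensional

section Radial

variable {E : Type*} [NormedAddCommGroup E] [NormedSpace ℝ E] {n : ℕ} {a b : ℝ}
  {ω ρ : ℝ → ℝ} {ξ : E → ℝ}

/-- Radial weights on the annulus `a ≤ |x| ≤ b` of a space of dimension `n + 1` for which the Hardy
inequality holds on each ray with constant one. The weight `ω` belongs to the boundary terms, while
the two bulk terms carry `ω / ρ` and `ω * ρ`; the factor `r ^ n` is the Jacobian of polar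
coordinates. -/
structure IsHardyWeight (n : ℕ) (a b : ℝ) (ω ρ : ℝ → ℝ) : Prop where
  measurable_weight : Measurable ω
  measurable_scale : Measurable ρ
  continuousOn_weight : ContinuousOn ω (Icc a b)
  continuousOn_scale : ContinuousOn ρ (Icc a b)
  weight_nonneg : ∀ r ∈ Icc a b, 0 ≤ ω r
  scale_pos : ∀ r ∈ Icc a b, 0 < ρ r
  exists_deriv : ∀ r ∈ Ioo a b, ∃ u' : ℝ,
    HasDerivWithinAt (fun r => r ^ n * ω r) u' (Ioi r) r ∧ 2 * (r ^ n * ω r) ≤ ρ r * u'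

theorem IsHardyWeight.setLIntegral_ray_le (h : IsHardyWeight n a b ω ρ) (ha : 0 ≤ a)
    (hab : a ≤ b) (hn : 0 < n) (hξ : ContDiff ℝ 1 ξ) {w : E} (hw : ‖w‖ = 1) :
    ENNReal.ofReal (a ^ n) * ENNReal.ofReal (ω a * ξ (a • w) ^ 2) +
        ∫⁻ r in Icc a b, ENNReal.ofReal (r ^ n) *
          ENNReal.ofReal (ω ‖r • w‖ / ρ ‖r • w‖ * ξ (r • w) ^ 2) ≤
      ENNReal.ofReal (b ^ n) * ENNReal.ofReal (ω b * ξ (b • w) ^ 2) +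
        ∫⁻ r in Icc a b, ENNReal.ofReal (r ^ n) * ENNReal.ofReal (ω ‖r • w‖ * ρ ‖r • w‖ *
          fderiv ℝ ξ (r • w) (‖r • w‖⁻¹ • r • w) ^ 2) := by
  choose! u' hu' using h.exists_deriv
  have hf (r : ℝ) : HasDerivAt (fun r : ℝ => ξ (r • w)) (fderiv ℝ ξ (r • w) w) r :=
    ((hξ.differentiable one_ne_zero (r • w)).hasFDerivAt.comp_hasDerivAt r
      ((hasDerivAt_id r).smul_const w)).congr_deriv (by rw [one_smul])
  have hf' : Continuous fun r : ℝ => fderiv ℝ ξ (r • w) w := by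
    have := hξ.continuous_fderiv one_ne_zero
    fun_prop
  have hray := setLIntegral_weighted_hardy hab (u := fun r => r ^ n * ω r)
    ((continuousOn_pow n).mul h.continuousOn_weight) h.continuousOn_scale
    (f := fun r => ξ (r • w)) (f' := fun r => fderiv ℝ ξ (r • w) w)
    (HasDerivAt.continuousOn fun r _ => hf r) hf'.continuousOn
    (fun r hr => mul_nonneg (pow_nonneg (ha.trans hr.1) n) (h.weight_nonneg r hr)) h.scale_pos
    (fun r hr => (hu' r hr).1) (fun r _ => (hf r).hasDerivWithinAt) (fun r hr => (hu' r hr).2)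
  rw [← ENNReal.ofReal_mul (by positivity), ← ENNReal.ofReal_mul (pow_nonneg (ha.trans hab) n),
    ← mul_assoc, ← mul_assoc]
  convert hray using 2
  · refine setLIntegral_congr_fun measurableSet_Icc fun r hr => ?_
    have hr₀ := ha.trans hr.1
    simp only [norm_smul, hw, mul_one, Real.norm_of_nonneg hr₀,
      ← ENNReal.ofReal_mul (pow_nonneg hr₀ n), mul_div_assoc, mul_assoc]
  · refine setLIntegral_congr_fun measurableSet_Icc fun r hr => ?_
    have hr₀ := ha.trans hr.1
    -- At `r = 0` the radial direction `‖0‖⁻¹ • 0` is `0` instead of `w`, but there `r ^ n = 0`.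
    obtain rfl | hr₀ := hr₀.eq_or_lt
    · simp [hn.ne']
    · simp only [norm_smul, hw, mul_one, Real.norm_of_nonneg hr₀.le, inv_smul_smul₀ hr₀.ne',
        ← ENNReal.ofReal_mul (pow_nonneg hr₀.le n), mul_assoc]

variable [FiniteDimensional ℝ E] [MeasurableSpace E] [BorelSpace E] (μ : Measure E)
  [μ.IsAddHaarMeasure]

theorem measurable_fderiv_radial (hξ : ContDiff ℝ 1 ξ) :
    Measurable fun x => fderiv ℝ ξ x (‖x‖⁻¹ • x) := by
  have : Measurable (fderiv ℝ ξ) := (hξ.continuous_fderiv one_ne_zero).measurable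
  have : Measurable fun x : E => ‖x‖⁻¹ • x := by fun_prop
  fun_prop

theorem IsHardyWeight.lintegral_toSphere_le (h : IsHardyWeight n a b ω ρ) (ha : 0 ≤ a)
    (hab : a ≤ b) (hn : 0 < n) (hE : finrank ℝ E = n + 1) (hξ : ContDiff ℝ 1 ξ) :
    ENNReal.ofReal (a ^ n) *
          ∫⁻ w : sphere (0 : E) 1, ENNReal.ofReal (ω a * ξ (a • (w : E)) ^ 2) ∂μ.toSphere +
        ∫⁻ x in norm ⁻¹' Icc a b, ENNReal.ofReal (ω ‖x‖ / ρ ‖x‖ * ξ x ^ 2) ∂μ ≤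
      ENNReal.ofReal (b ^ n) *
          ∫⁻ w : sphere (0 : E) 1, ENNReal.ofReal (ω b * ξ (b • (w : E)) ^ 2) ∂μ.toSphere +
        ∫⁻ x in norm ⁻¹' Icc a b, ENNReal.ofReal (ω ‖x‖ * ρ ‖x‖ *
          fderiv ℝ ξ x (‖x‖⁻¹ • x) ^ 2) ∂μ := by
  have hω := h.measurable_weight
  have hρ := h.measurable_scale
  have hξ_meas : Measurable ξ := hξ.continuous.measurable
  have hfderiv := measurable_fderiv_radial hξ
  rw [setLIntegral_norm_preimage_Icc μ hE (by fun_prop) ha,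
    setLIntegral_norm_preimage_Icc μ hE (by fun_prop) ha,
    ← lintegral_const_mul _ (by fun_prop), ← lintegral_const_mul _ (by fun_prop),
    ← lintegral_add_left (by fun_prop), ← lintegral_add_left (by fun_prop)]
  exact lintegral_mono fun w => h.setLIntegral_ray_le ha hab hn hξ (norm_eq_of_mem_sphere w)

end Radial

section RadialHausdorff

variable {E : Type*} [NormedAddCommGroup E] {n : ℕ} {a b : ℝ} {v : ℝ → ℝ} {ξ : E → ℝ}

theorem integral_sphere_add_annulus_nonneg [MeasurableSpace E] [BorelSpace E] (μ : Measure E)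
    {R c : ℝ} (hc : 0 ≤ c) (hv : ∀ r ∈ Icc a b, 0 ≤ v r) (g : E → ℝ) :
    0 ≤ ∫ x in sphere 0 R, c * ξ x ^ 2 ∂μH[n] + ∫ x in norm ⁻¹' Icc a b, v ‖x‖ * g x ^ 2 ∂μ :=
  add_nonneg (integral_nonneg fun _ => mul_nonneg hc (sq_nonneg _))
    (setIntegral_nonneg (measurable_norm measurableSet_Icc) fun x hx =>
      mul_nonneg (hv ‖x‖ hx) (sq_nonneg _))

variable [NormedSpace ℝ E] [FiniteDimensional ℝ E]

theorem isCompact_norm_preimage_Icc (a b : ℝ) : IsCompact (norm ⁻¹' Icc a b : Set E) :=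
  (isCompact_closedBall 0 b).of_isClosed_subset (isClosed_Icc.preimage continuous_norm)
    fun _ hx => mem_closedBall_zero_iff.2 hx.2

variable [MeasurableSpace E] [BorelSpace E]

theorem hausdorffMeasure_sphere_lt_top (hE : finrank ℝ E = n + 1) (hn : 0 < n) {R : ℝ}
    (hR : 0 ≤ R) : μH[n] (sphere (0 : E) R) < ∞ := by
  obtain ⟨K, -, -, hH_le⟩ := exists_toSphere_hausdorffMeasure_comparable (addHaar : Measure E) hE hn
  have hunit : μH[n] (univ : Set (sphere (0 : E) 1)) < ∞ :=
    (hH_le univ).trans_lt (measure_lt_top (K • (addHaar : Measure E).toSphere) univ)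
  rw [← setLIntegral_one, lintegral_sphere_hausdorffMeasure hn hR measurable_const, lintegral_one]
  exact ENNReal.mul_lt_top ENNReal.ofReal_lt_top hunit

theorem integrableOn_sphere_hausdorffMeasure (hE : finrank ℝ E = n + 1) (hn : 0 < n) {R : ℝ}
    (hR : 0 ≤ R) {f : E → ℝ} (hf : Continuous f) : IntegrableOn f (sphere 0 R) μH[n] := by
  obtain ⟨M, hM⟩ := (isCompact_sphere (0 : E) R).exists_bound_of_continuousOn hf.continuousOn
  exact Measure.integrableOn_of_bounded (hausdorffMeasure_sphere_lt_top hE hn hR).ne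
    hf.aestronglyMeasurable (ae_restrict_of_forall_mem isClosed_sphere.measurableSet hM)

theorem ofReal_integral_sphere_add_annulus (μ : Measure E) (hE : finrank ℝ E = n + 1)
    (hn : 0 < n) {R c : ℝ} (hR : 0 ≤ R) (hc : 0 ≤ c) (hξ : Continuous ξ)
    (hv : ∀ r ∈ Icc a b, 0 ≤ v r) {g : E → ℝ}
    (hg : IntegrableOn (fun x => v ‖x‖ * g x ^ 2) (norm ⁻¹' Icc a b) μ) :
    ENNReal.ofReal (∫ x in sphere 0 R, c * ξ x ^ 2 ∂μH[n] +
        ∫ x in norm ⁻¹' Icc a b, v ‖x‖ * g x ^ 2 ∂μ) =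
      ∫⁻ x in sphere 0 R, ENNReal.ofReal (c * ξ x ^ 2) ∂μH[n] +
        ∫⁻ x in norm ⁻¹' Icc a b, ENNReal.ofReal (v ‖x‖ * g x ^ 2) ∂μ := by
  have hA : MeasurableSet (norm ⁻¹' Icc a b : Set E) := measurable_norm measurableSet_Icc
  have hsphere_nonneg (x : E) : 0 ≤ c * ξ x ^ 2 := mul_nonneg hc (sq_nonneg _)
  have hannulus_nonneg : ∀ x ∈ norm ⁻¹' Icc a b, 0 ≤ v ‖x‖ * g x ^ 2 := fun x hx =>
    mul_nonneg (hv ‖x‖ hx) (sq_nonneg _)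
  rw [ENNReal.ofReal_add (integral_nonneg hsphere_nonneg) (setIntegral_nonneg hA hannulus_nonneg),
    ofReal_integral_eq_lintegral_ofReal
      (integrableOn_sphere_hausdorffMeasure hE hn hR (by fun_prop)) (.of_forall hsphere_nonneg),
    ofReal_integral_eq_lintegral_ofReal hg (ae_restrict_of_forall_mem hA hannulus_nonneg)]

variable (μ : Measure E) [μ.IsAddHaarMeasure]

theorem integrableOn_annulus_mul_sq (hv : ContinuousOn v (Icc a b)) (hξ : Continuous ξ) :
    IntegrableOn (fun x => v ‖x‖ * ξ x ^ 2) (norm ⁻¹' Icc a b) μ :=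
  ContinuousOn.integrableOn_compact (isCompact_norm_preimage_Icc a b)
    ((hv.comp continuous_norm.continuousOn fun _ hx => hx).mul (hξ.pow 2).continuousOn)

theorem integrableOn_annulus_mul_fderiv_radial_sq (hv : ContinuousOn v (Icc a b))
    (hv_meas : Measurable v) (hξ : ContDiff ℝ 1 ξ) :
    IntegrableOn (fun x => v ‖x‖ * fderiv ℝ ξ x (‖x‖⁻¹ • x) ^ 2) (norm ⁻¹' Icc a b) μ := by
  have hbound : IntegrableOn (fun x => v ‖x‖ * ‖fderiv ℝ ξ x‖ ^ 2) (norm ⁻¹' Icc a b) μ :=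
    integrableOn_annulus_mul_sq μ hv (hξ.continuous_fderiv one_ne_zero).norm
  have := measurable_fderiv_radial hξ
  refine Integrable.mono hbound (Measurable.aestronglyMeasurable (by fun_prop))
    (.of_forall fun x => ?_)
  have hunit : ‖‖x‖⁻¹ • x‖ ≤ 1 := by
    rw [norm_smul, norm_inv, norm_norm]
    exact inv_mul_le_one
  rw [norm_mul, norm_mul, norm_pow, norm_pow, norm_norm]
  gcongr
  exact (ContinuousLinearMap.le_opNorm _ _).trans (mul_le_of_le_one_right (norm_nonneg _) hunit)

theorem exists_lintegral_radial_hardy (hE : finrank ℝ E = n + 1) (hn : 0 < n) :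
    ∃ C > (0 : ℝ≥0), ∀ (a b : ℝ) (ω ρ : ℝ → ℝ) (ξ : E → ℝ), 0 ≤ a → a ≤ b →
      IsHardyWeight n a b ω ρ → ContDiff ℝ 1 ξ →
      ∫⁻ x in sphere 0 a, ENNReal.ofReal (ω a * ξ x ^ 2) ∂μH[n] +
          ∫⁻ x in norm ⁻¹' Icc a b, ENNReal.ofReal (ω ‖x‖ / ρ ‖x‖ * ξ x ^ 2) ∂μ ≤
        C * (∫⁻ x in sphere 0 b, ENNReal.ofReal (ω b * ξ x ^ 2) ∂μH[n] +
          ∫⁻ x in norm ⁻¹' Icc a b, ENNReal.ofReal (ω ‖x‖ * ρ ‖x‖ *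
            fderiv ℝ ξ x (‖x‖⁻¹ • x) ^ 2) ∂μ) := by
  obtain ⟨K, hK, hσ_le, hH_le⟩ := exists_toSphere_hausdorffMeasure_comparable μ hE hn
  have hK' : (1 : ℝ≥0∞) ≤ K := by exact_mod_cast hK
  have hK_pos := one_pos.trans_le hK
  refine ⟨K * K, mul_pos hK_pos hK_pos, fun a b ω ρ ξ ha hab h hξ => ?_⟩
  have hmeas (R : ℝ) : Measurable fun x : E => ENNReal.ofReal (ω R * ξ x ^ 2) := by
    have := hξ.continuous.measurable
    fun_prop
  rw [lintegral_sphere_hausdorffMeasure hn ha (hmeas a),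
    lintegral_sphere_hausdorffMeasure hn (ha.trans hab) (hmeas b)]
  set A := ∫⁻ x in norm ⁻¹' Icc a b, ENNReal.ofReal (ω ‖x‖ / ρ ‖x‖ * ξ x ^ 2) ∂μ
  set B := ∫⁻ x in norm ⁻¹' Icc a b,
    ENNReal.ofReal (ω ‖x‖ * ρ ‖x‖ * fderiv ℝ ξ x (‖x‖⁻¹ • x) ^ 2) ∂μ
  let S (R : ℝ) (σ : Measure (sphere (0 : E) 1)) : ℝ≥0∞ :=
    ENNReal.ofReal (R ^ n) * ∫⁻ w, ENNReal.ofReal (ω R * ξ (R • (w : E)) ^ 2) ∂σ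
  have hS {R : ℝ} {σ τ : Measure (sphere (0 : E) 1)} (hστ : σ ≤ K • τ) : S R σ ≤ K * S R τ := by
    calc S R σ ≤ ENNReal.ofReal (R ^ n) *
          ∫⁻ w, ENNReal.ofReal (ω R * ξ (R • (w : E)) ^ 2) ∂(K • τ) :=
            mul_le_mul' le_rfl (lintegral_mono' hστ le_rfl)
      _ = K * S R τ := by
        rw [lintegral_smul_measure, ENNReal.smul_def, smul_eq_mul, mul_left_comm]
  calc S a μH[n] + A ≤ K * S a μ.toSphere + K * A :=
        add_le_add (hS hH_le) (le_mul_of_one_le_left' hK')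
    _ = K * (S a μ.toSphere + A) := (mul_add _ _ _).symm
    _ ≤ K * (S b μ.toSphere + B) :=
        mul_le_mul' le_rfl <| h.lintegral_toSphere_le μ ha hab hn hE hξ
    _ ≤ K * (K * S b μH[n] + K * B) :=
        mul_le_mul' le_rfl (add_le_add (hS hσ_le) (le_mul_of_one_le_left' hK'))
    _ = (K * K : ℝ≥0) * (S b μH[n] + B) := by
        rw [← mul_add, ← mul_assoc, ENNReal.coe_mul]

theorem exists_integral_radial_hardy (hE : finrank ℝ E = n + 1) (hn : 0 < n) :
    ∃ C > (0 : ℝ), ∀ (a b : ℝ) (ω ρ : ℝ → ℝ) (ξ : E → ℝ), 0 ≤ a → a ≤ b →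
      IsHardyWeight n a b ω ρ → ContDiff ℝ 1 ξ →
      ∫ x in sphere 0 a, ω a * ξ x ^ 2 ∂μH[n] +
          ∫ x in norm ⁻¹' Icc a b, ω ‖x‖ / ρ ‖x‖ * ξ x ^ 2 ∂μ ≤
        C * (∫ x in sphere 0 b, ω b * ξ x ^ 2 ∂μH[n] +
          ∫ x in norm ⁻¹' Icc a b, ω ‖x‖ * ρ ‖x‖ * fderiv ℝ ξ x (‖x‖⁻¹ • x) ^ 2 ∂μ) := by
  obtain ⟨C, hC_pos, hC⟩ := exists_lintegral_radial_hardy μ hE hn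
  refine ⟨C, hC_pos, fun a b ω ρ ξ ha hab h hξ => ?_⟩
  have hω_meas := h.measurable_weight
  have hρ_meas := h.measurable_scale
  have hωa : 0 ≤ ω a := h.weight_nonneg a (left_mem_Icc.2 hab)
  have hωb : 0 ≤ ω b := h.weight_nonneg b (right_mem_Icc.2 hab)
  have hdiv_nonneg : ∀ r ∈ Icc a b, 0 ≤ ω r / ρ r := fun r hr =>
    div_nonneg (h.weight_nonneg r hr) (h.scale_pos r hr).le
  have hmul_nonneg : ∀ r ∈ Icc a b, 0 ≤ ω r * ρ r := fun r hr =>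
    mul_nonneg (h.weight_nonneg r hr) (h.scale_pos r hr).le
  have hdiv_int := integrableOn_annulus_mul_sq μ
    (h.continuousOn_weight.div h.continuousOn_scale fun r hr => (h.scale_pos r hr).ne')
    hξ.continuous
  have hmul_int := integrableOn_annulus_mul_fderiv_radial_sq μ
    (h.continuousOn_weight.mul h.continuousOn_scale) (by fun_prop) hξ
  rw [← ENNReal.ofReal_le_ofReal_iff
      (mul_nonneg C.coe_nonneg (integral_sphere_add_annulus_nonneg μ hωb hmul_nonneg _)),
    ENNReal.ofReal_mul C.coe_nonneg, ENNReal.ofReal_coe_nnreal,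
    ofReal_integral_sphere_add_annulus μ hE hn ha hωa hξ.continuous hdiv_nonneg hdiv_int,
    ofReal_integral_sphere_add_annulus μ hE hn (ha.trans hab) hωb hξ.continuous hmul_nonneg
      hmul_int]
  exact hC a b ω ρ ξ ha hab h hξ

end RadialHausdorff

section LightConeWeight

variable {μ₁ μ₂ : ℝ}

theorem nwt_of_nonneg {q : ℝ} (hq : 0 ≤ q) : nwt μ₁ μ₂ q = (1 + |q|) ^ μ₂ :=
  if_pos hq

theorem nwt_of_nonpos {q : ℝ} (hq : q ≤ 0) : nwt μ₁ μ₂ q = (1 + |q|) ^ (-1 - μ₁) := by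
  obtain rfl | hq := hq.eq_or_lt
  · simp [nwt]
  · exact if_neg hq.not_ge

theorem nwt_pos (q : ℝ) : 0 < nwt μ₁ μ₂ q := by
  unfold nwt
  split_ifs <;> positivity

theorem continuous_nwt : Continuous (nwt μ₁ μ₂) := by
  have hpow (c : ℝ) : Continuous fun q : ℝ => (1 + |q|) ^ c :=
    (by fun_prop : Continuous fun q : ℝ => 1 + |q|).rpow_const fun q => .inl (by positivity)
  refine Continuous.if_le (hpow _) (hpow _) continuous_const continuous_id fun q hq => ?_
  simp [← hq]

theorem exists_hasDerivWithinAt_nwt {κ : ℝ} (h₁ : 2 * κ ≤ 1 + μ₁) (h₂ : 2 * κ ≤ μ₂) (q : ℝ) :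
    ∃ n' : ℝ, HasDerivWithinAt (nwt μ₁ μ₂) n' (Ioi q) q ∧
      2 * κ * nwt μ₁ μ₂ q ≤ (1 + |q|) * n' := by
  rcases le_or_gt 0 q with hq | hq
  · have hpos : 0 < 1 + q := by positivity
    have heq (p : ℝ) (hp : q ≤ p) : nwt μ₁ μ₂ p = (1 + p) ^ μ₂ := by
      rw [nwt_of_nonneg (hq.trans hp), abs_of_nonneg (hq.trans hp)]
    refine ⟨μ₂ * (1 + q) ^ (μ₂ - 1), ?_, ?_⟩
    · have h := ((hasDerivAt_id q).const_add 1).rpow_const (p := μ₂) (.inl hpos.ne')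
      simp only [one_mul] at h
      exact h.hasDerivWithinAt.congr (fun p hp => heq p (mem_Ioi.1 hp).le) (heq q le_rfl)
    · rw [heq q le_rfl, abs_of_nonneg hq, mul_left_comm, Real.rpow_sub_one hpos.ne',
        mul_div_cancel₀ _ hpos.ne']
      gcongr
  · have hpos : 0 < 1 - q := by linarith
    have heq (p : ℝ) (hp : p < 0) : nwt μ₁ μ₂ p = (1 - p) ^ (-1 - μ₁) := by
      rw [nwt_of_nonpos hp.le, abs_of_neg hp, sub_eq_add_neg 1 p]
    refine ⟨(1 + μ₁) * (1 - q) ^ (-1 - μ₁ - 1), ?_, ?_⟩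
    · have h := ((hasDerivAt_id q).const_sub 1).rpow_const (p := -1 - μ₁) (.inl hpos.ne')
      refine (h.congr_of_eventuallyEq
        ((eventually_lt_nhds hq).mono heq)).hasDerivWithinAt.congr_deriv ?_
      simp only [id_eq]
      ring
    · rw [heq q hq, abs_of_neg hq, ← sub_eq_add_neg, mul_left_comm, Real.rpow_sub_one hpos.ne',
        mul_div_cancel₀ _ hpos.ne']
      gcongr

theorem hasDerivAt_pow_mul_rpow_neg (n : ℕ) {α t r : ℝ} (ht : 0 ≤ t) (hr : 0 < r) :
    HasDerivAt (fun r => r ^ n * (1 + t + r) ^ (-α))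
      (r ^ n * (1 + t + r) ^ (-α) * (n / r - α / (1 + t + r))) r := by
  have hpos : 0 < 1 + t + r := by positivity
  have h := (hasDerivAt_pow n r).mul
    (((hasDerivAt_id r).const_add (1 + t)).rpow_const (p := -α) (.inl hpos.ne'))
  refine h.congr_deriv ?_
  have hpow : (n : ℝ) * r ^ (n - 1) = n * r ^ n / r := by
    rcases n with - | n
    · simp
    · rw [Nat.add_sub_cancel, pow_succ, mul_div_assoc, mul_div_cancel_right₀ _ hr.ne']
  simp only [id_eq, Real.rpow_sub_one hpos.ne', hpow]
  ring

/-- The weight `n(q) (1 + s)^{-α}` of the boundary terms, as a function of the radius. -/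
noncomputable def lightConeWeight (μ₁ μ₂ α t r : ℝ) : ℝ :=
  nwt μ₁ μ₂ (r - t) * (1 + t + r) ^ (-α)

variable {α t : ℝ}

theorem measurable_lightConeWeight : Measurable (lightConeWeight μ₁ μ₂ α t) := by
  have := (continuous_nwt (μ₁ := μ₁) (μ₂ := μ₂)).measurable
  unfold lightConeWeight
  fun_prop

theorem continuousOn_lightConeWeight (ht : 0 ≤ t) :
    ContinuousOn (lightConeWeight μ₁ μ₂ α t) (Ici 0) :=
  (continuous_nwt.comp (continuous_sub_right t)).continuousOn.mul
    ((continuous_const_add (1 + t)).continuousOn.rpow_const fun r hr => .inl (by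
      have : 0 ≤ r := hr
      positivity))

theorem continuousOn_lightConeWeight_mul_rpow (e : ℝ) (ht : 0 ≤ t) :
    ContinuousOn (fun r => lightConeWeight μ₁ μ₂ α t r * (1 + |r - t|) ^ e) (Ici 0) :=
  (continuousOn_lightConeWeight ht).mul <|
    ContinuousOn.rpow_const (by fun_prop) fun r _ => .inl (by positivity)

theorem exists_hasDerivWithinAt_pow_mul_lightConeWeight {n : ℕ} {κ r : ℝ} (hκ : 0 < κ)
    (h₁ : 2 * κ ≤ 1 + μ₁) (h₂ : 2 * κ ≤ μ₂) (hα : α ≤ n) (ht : 0 ≤ t) (hr : 0 < r) :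
    ∃ u' : ℝ, HasDerivWithinAt (fun r => r ^ n * lightConeWeight μ₁ μ₂ α t r) u' (Ioi r) r ∧
      2 * (r ^ n * lightConeWeight μ₁ μ₂ α t r) ≤ (1 + |r - t|) / κ * u' := by
  obtain ⟨n', hn', hle⟩ := exists_hasDerivWithinAt_nwt h₁ h₂ (r - t)
  set W : ℝ → ℝ := fun r => r ^ n * (1 + t + r) ^ (-α)
  set W' := W r * (n / r - α / (1 + t + r))
  have hW : 0 ≤ W r := by positivity
  have hW' : 0 ≤ W' := by
    refine mul_nonneg hW (sub_nonneg.2 ?_)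
    gcongr
    linarith
  have hweight : (fun r => r ^ n * lightConeWeight μ₁ μ₂ α t r) =
      fun r => nwt μ₁ μ₂ (r - t) * W r :=
    funext fun r => mul_left_comm _ _ _
  have hderiv_nwt : HasDerivWithinAt (fun r => nwt μ₁ μ₂ (r - t)) n' (Ioi r) r :=
    (HasDerivWithinAt.comp (h₂ := nwt μ₁ μ₂) r hn'
      ((hasDerivAt_id r).sub_const t).hasDerivWithinAt
      fun p hp => sub_lt_sub_right (mem_Ioi.1 hp) t).congr_deriv (mul_one n')
  refine ⟨n' * W r + nwt μ₁ μ₂ (r - t) * W', ?_, ?_⟩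
  · rw [hweight]
    exact hderiv_nwt.mul (hasDerivAt_pow_mul_rpow_neg n ht hr).hasDerivWithinAt
  · calc 2 * (r ^ n * lightConeWeight μ₁ μ₂ α t r)
        = 2 * κ * nwt μ₁ μ₂ (r - t) * W r / κ := by
          rw [congrFun hweight r]
          field_simp
      _ ≤ (1 + |r - t|) * n' * W r / κ := by gcongr
      _ = (1 + |r - t|) / κ * (n' * W r) := by ring
      _ ≤ (1 + |r - t|) / κ * (n' * W r + nwt μ₁ μ₂ (r - t) * W') := by
          gcongr
          exact le_add_of_nonneg_right (mul_nonneg (nwt_pos _).le hW')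

theorem isHardyWeight_lightConeWeight {n : ℕ} {κ a b : ℝ} (hκ : 0 < κ) (h₁ : 2 * κ ≤ 1 + μ₁)
    (h₂ : 2 * κ ≤ μ₂) (hα : α ≤ n) (ht : 0 ≤ t) (ha : 0 ≤ a) :
    IsHardyWeight n a b (lightConeWeight μ₁ μ₂ α t) fun r => (1 + |r - t|) / κ where
  measurable_weight := measurable_lightConeWeight
  measurable_scale := by fun_prop
  continuousOn_weight :=
    (continuousOn_lightConeWeight ht).mono fun r hr => ha.trans hr.1
  continuousOn_scale := by fun_prop
  weight_nonneg r hr := by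
    have := ha.trans hr.1
    exact mul_nonneg (nwt_pos _).le (by positivity)
  scale_pos r _ := by positivity
  exists_deriv _ hr :=
    exists_hasDerivWithinAt_pow_mul_lightConeWeight hκ h₁ h₂ hα ht (ha.trans_lt hr.1)

end LightConeWeight

section LocalizedHardy

variable {E : Type*} [NormedAddCommGroup E] [NormedSpace ℝ E] [FiniteDimensional ℝ E]
  [MeasurableSpace E] [BorelSpace E] (μ : Measure E) [μ.IsAddHaarMeasure]

theorem norm_preimage_Ioc_ae_eq_Icc [Nontrivial E] (a b : ℝ) :
    (norm ⁻¹' Ioc a b : Set E) =ᵐ[μ] norm ⁻¹' Icc a b := by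
  filter_upwards [measure_eq_zero_iff_ae_notMem.1 (addHaar_sphere μ 0 a)] with x hx
  have hne : a ≠ ‖x‖ := fun h => hx (mem_sphere_zero_iff_norm.2 h.symm)
  exact propext (and_congr_left fun _ => ⟨le_of_lt, fun h => h.lt_of_ne hne⟩)

theorem setIntegral_annulus_eq_add [Nontrivial E] {G : Type*} [NormedAddCommGroup G]
    [NormedSpace ℝ G] {a b : ℝ} (t : ℝ) {F : E → G}
    (hF : IntegrableOn F (norm ⁻¹' Icc a b) μ) :
    ∫ x in norm ⁻¹' Icc a b, F x ∂μ =
      ∫ x in norm ⁻¹' Icc (min a t) (min b t), F x ∂μ +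
        ∫ x in norm ⁻¹' Icc (max a t) (max b t), F x ∂μ := by
  have hinter : (norm ⁻¹' Ioc a b : Set E) ∩ norm ⁻¹' Iic t =
      norm ⁻¹' Ioc (min a t) (min b t) := by
    rw [← preimage_inter]
    congr 1
    ext r
    simp only [mem_inter_iff, mem_Ioc, mem_Iic, min_lt_iff, le_min_iff]
    grind
  have hdiff : (norm ⁻¹' Ioc a b : Set E) \ norm ⁻¹' Iic t =
      norm ⁻¹' Ioc (max a t) (max b t) := by
    rw [← preimage_sdiff]
    congr 1
    ext r
    simp only [Set.mem_sdiff, mem_Ioc, mem_Iic, max_lt_iff, le_max_iff]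
    grind
  simp only [← setIntegral_congr_set (norm_preimage_Ioc_ae_eq_Icc μ _ _)]
  rw [← hinter, ← hdiff, integral_inter_add_sdiff (measurable_norm measurableSet_Iic)
    (hF.congr_set_ae (norm_preimage_Ioc_ae_eq_Icc μ a b))]

variable {μ₁ μ₂ α t a b : ℝ}

theorem setIntegral_annulus_lightConeWeight [Nontrivial E] (e : ℝ) {f : E → ℝ}
    (hF : IntegrableOn (fun x => lightConeWeight μ₁ μ₂ α t ‖x‖ * (1 + |‖x‖ - t|) ^ e * f x ^ 2)
      (norm ⁻¹' Icc a b) μ) :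
    ∫ x in norm ⁻¹' Icc a b,
        lightConeWeight μ₁ μ₂ α t ‖x‖ * (1 + |‖x‖ - t|) ^ e * f x ^ 2 ∂μ =
      ∫ x in norm ⁻¹' Icc (min a t) (min b t),
          f x ^ 2 * (1 + |‖x‖ - t|) ^ (-1 - μ₁ + e) * (1 + t + ‖x‖) ^ (-α) ∂μ +
        ∫ x in norm ⁻¹' Icc (max a t) (max b t),
          f x ^ 2 * (1 + |‖x‖ - t|) ^ (μ₂ + e) * (1 + t + ‖x‖) ^ (-α) ∂μ := by
  have hmeas (c d : ℝ) : MeasurableSet (norm ⁻¹' Icc c d : Set E) :=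
    measurable_norm measurableSet_Icc
  rw [setIntegral_annulus_eq_add μ t hF]
  congr 1
  · refine setIntegral_congr_fun (hmeas _ _) fun x hx => ?_
    have hq : ‖x‖ - t ≤ 0 := sub_nonpos.2 (hx.2.trans (min_le_right b t))
    simp only [lightConeWeight, nwt_of_nonpos hq,
      Real.rpow_add (show 0 < 1 + |‖x‖ - t| by positivity)]
    ring
  · refine setIntegral_congr_fun (hmeas _ _) fun x hx => ?_
    have hq : 0 ≤ ‖x‖ - t := sub_nonneg.2 ((le_max_right a t).trans hx.1)
    simp only [lightConeWeight, nwt_of_nonneg hq,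
      Real.rpow_add (show 0 < 1 + |‖x‖ - t| by positivity)]
    ring

variable {κ : ℝ} {ξ : E → ℝ}

theorem setIntegral_annulus_lightConeWeight_div_mul_sq [Nontrivial E] (hκ : κ ≠ 0) (ht : 0 ≤ t)
    (ha : 0 ≤ a) (hξ : Continuous ξ) :
    ∫ x in norm ⁻¹' Icc a b,
        lightConeWeight μ₁ μ₂ α t ‖x‖ / ((1 + |‖x‖ - t|) / κ) * ξ x ^ 2 ∂μ =
      κ * (∫ x in norm ⁻¹' Icc (min a t) (min b t),
          ξ x ^ 2 * (1 + |‖x‖ - t|) ^ (-2 - μ₁) * (1 + t + ‖x‖) ^ (-α) ∂μ +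
        ∫ x in norm ⁻¹' Icc (max a t) (max b t),
          ξ x ^ 2 * (1 + |‖x‖ - t|) ^ (μ₂ - 1) * (1 + t + ‖x‖) ^ (-α) ∂μ) := by
  have hcont := (continuousOn_lightConeWeight_mul_rpow (μ₁ := μ₁) (μ₂ := μ₂) (α := α) (-1) ht).mono
    fun r (hr : r ∈ Icc a b) => ha.trans hr.1
  rw [show -2 - μ₁ = -1 - μ₁ + -1 by ring, sub_eq_add_neg μ₂,
    ← setIntegral_annulus_lightConeWeight μ (-1) (integrableOn_annulus_mul_sq μ hcont hξ),
    ← integral_const_mul]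
  congr 1 with x
  rw [Real.rpow_neg_one]
  field_simp

theorem setIntegral_annulus_lightConeWeight_mul_fderiv_radial_sq [Nontrivial E] (ht : 0 ≤ t)
    (ha : 0 ≤ a) (hξ : ContDiff ℝ 1 ξ) :
    ∫ x in norm ⁻¹' Icc a b, lightConeWeight μ₁ μ₂ α t ‖x‖ * ((1 + |‖x‖ - t|) / κ) *
        fderiv ℝ ξ x (‖x‖⁻¹ • x) ^ 2 ∂μ =
      (∫ x in norm ⁻¹' Icc (min a t) (min b t), fderiv ℝ ξ x (‖x‖⁻¹ • x) ^ 2 *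
          (1 + |‖x‖ - t|) ^ (-μ₁) * (1 + t + ‖x‖) ^ (-α) ∂μ +
        ∫ x in norm ⁻¹' Icc (max a t) (max b t), fderiv ℝ ξ x (‖x‖⁻¹ • x) ^ 2 *
          (1 + |‖x‖ - t|) ^ (1 + μ₂) * (1 + t + ‖x‖) ^ (-α) ∂μ) / κ := by
  have hcont := (continuousOn_lightConeWeight_mul_rpow (μ₁ := μ₁) (μ₂ := μ₂) (α := α) 1 ht).mono
    fun r (hr : r ∈ Icc a b) => ha.trans hr.1
  have hmeas : Measurable fun r => lightConeWeight μ₁ μ₂ α t r * (1 + |r - t|) ^ (1 : ℝ) := by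
    have := measurable_lightConeWeight (μ₁ := μ₁) (μ₂ := μ₂) (α := α) (t := t)
    fun_prop
  rw [show -μ₁ = -1 - μ₁ + 1 by ring, add_comm 1 μ₂,
    ← setIntegral_annulus_lightConeWeight μ 1
      (integrableOn_annulus_mul_fderiv_radial_sq μ hcont hmeas hξ), ← integral_div]
  congr 1 with x
  rw [Real.rpow_one]
  ring

theorem add_le_div_sq_mul_add {C κ A B X Y Z W : ℝ} (hC : 0 < C) (hκ : 0 < κ) (hκ_one : κ ≤ 1)
    (hA : 0 ≤ A) (hB : 0 ≤ B) (h : A + κ * (X + Y) ≤ C * (B + (Z + W) / κ)) :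
    A + X + Y ≤ C / κ ^ 2 * (B + Z + W) := by
  rw [← mul_le_mul_iff_right₀ hκ]
  calc κ * (A + X + Y) = κ * A + κ * (X + Y) := by ring
    _ ≤ A + κ * (X + Y) := by
      gcongr
      exact mul_le_of_le_one_left hA hκ_one
    _ ≤ C * (B + (Z + W) / κ) := h
    _ ≤ C * (B / κ + (Z + W) / κ) := by
      gcongr
      exact le_div_self hB hκ hκ_one
    _ = κ * (C / κ ^ 2 * (B + Z + W)) := by
      field_simp
      ring

theorem exists_integral_lightConeWeight_hardy {n : ℕ} (hE : finrank ℝ E = n + 1) (hn : 0 < n)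
    (hμ₁ : -1 < μ₁) (hμ₂ : 0 < μ₂) :
    ∃ C > (0 : ℝ), ∀ α t a b : ℝ, α ≤ n → 0 ≤ t → 0 ≤ a → a ≤ b →
      ∀ ξ : E → ℝ, ContDiff ℝ 1 ξ →
      (∫ x in sphere 0 a, nwt μ₁ μ₂ (a - t) * ξ x ^ 2 * (1 + t + a) ^ (-α) ∂μH[n]) +
          (∫ x in norm ⁻¹' Icc (min a t) (min b t),
            ξ x ^ 2 * (1 + |‖x‖ - t|) ^ (-2 - μ₁) * (1 + t + ‖x‖) ^ (-α) ∂μ) +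
          (∫ x in norm ⁻¹' Icc (max a t) (max b t),
            ξ x ^ 2 * (1 + |‖x‖ - t|) ^ (μ₂ - 1) * (1 + t + ‖x‖) ^ (-α) ∂μ) ≤
        C * ((∫ x in sphere 0 b, nwt μ₁ μ₂ (b - t) * ξ x ^ 2 * (1 + t + b) ^ (-α) ∂μH[n]) +
          (∫ x in norm ⁻¹' Icc (min a t) (min b t), fderiv ℝ ξ x (‖x‖⁻¹ • x) ^ 2 *
            (1 + |‖x‖ - t|) ^ (-μ₁) * (1 + t + ‖x‖) ^ (-α) ∂μ) +
          (∫ x in norm ⁻¹' Icc (max a t) (max b t), fderiv ℝ ξ x (‖x‖⁻¹ • x) ^ 2 *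
            (1 + |‖x‖ - t|) ^ (1 + μ₂) * (1 + t + ‖x‖) ^ (-α) ∂μ)) := by
  have : Nontrivial E := Module.nontrivial_of_finrank_pos (R := ℝ) (hE ▸ n.succ_pos)
  obtain ⟨C, hC, hHardy⟩ := exists_integral_radial_hardy μ hE hn
  obtain ⟨κ, hκ, hκ_one, h₁, h₂⟩ : ∃ κ > 0, κ ≤ 1 ∧ 2 * κ ≤ 1 + μ₁ ∧ 2 * κ ≤ μ₂ := by
    refine ⟨min 1 (min (1 + μ₁) μ₂ / 2), ?_⟩
    grind
  refine ⟨C / κ ^ 2, by positivity, fun α t a b hα ht ha hab ξ hξ => ?_⟩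
  have hsphere (R : ℝ) : ∫ x in sphere (0 : E) R, lightConeWeight μ₁ μ₂ α t R * ξ x ^ 2 ∂μH[n] =
      ∫ x in sphere 0 R, nwt μ₁ μ₂ (R - t) * ξ x ^ 2 * (1 + t + R) ^ (-α) ∂μH[n] := by
    simp only [lightConeWeight, mul_right_comm]
  have hsphere_nonneg {R : ℝ} (hR : 0 ≤ R) :
      0 ≤ ∫ x in sphere (0 : E) R, nwt μ₁ μ₂ (R - t) * ξ x ^ 2 * (1 + t + R) ^ (-α) ∂μH[n] :=
    integral_nonneg fun x => by
      have := nwt_pos (μ₁ := μ₁) (μ₂ := μ₂) (R - t)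
      positivity
  have hle := hHardy a b _ _ ξ ha hab (isHardyWeight_lightConeWeight hκ h₁ h₂ hα ht ha) hξ
  rw [setIntegral_annulus_lightConeWeight_div_mul_sq μ hκ.ne' ht ha hξ.continuous,
    setIntegral_annulus_lightConeWeight_mul_fderiv_radial_sq μ ht ha hξ, hsphere, hsphere] at hle
  exact add_le_div_sq_mul_add hC hκ hκ_one (hsphere_nonneg ha) (hsphere_nonneg (ha.trans hab)) hle

end LocalizedHardy

section OuterRadius

variable {E : Type*} [NormedAddCommGroup E]

theorem setOf_ofReal_norm_le_ofReal (c : ℝ) {d : ℝ} (hd : 0 ≤ d) :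
    {x : E | c ≤ ‖x‖ ∧ ENNReal.ofReal ‖x‖ ≤ ENNReal.ofReal d} = norm ⁻¹' Icc c d := by
  simp only [ENNReal.ofReal_le_ofReal_iff hd]
  rfl

theorem setIntegral_ofReal_norm_le_top [MeasurableSpace E] [OpensMeasurableSpace E]
    (μ : Measure E) {c d : ℝ} {F : E → ℝ} (hF : ∀ x, d ≤ ‖x‖ → F x = 0) :
    ∫ x in {x : E | c ≤ ‖x‖ ∧ ENNReal.ofReal ‖x‖ ≤ ⊤}, F x ∂μ =
      ∫ x in norm ⁻¹' Icc c d, F x ∂μ := by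
  simp only [le_top, and_true]
  refine setIntegral_eq_of_subset_of_forall_sdiff_eq_zero
    (measurableSet_le measurable_const measurable_norm) (fun x hx => hx.1) fun x hx => hF x ?_
  by_contra! hlt
  exact hx.2 ⟨hx.1, hlt.le⟩

theorem exists_eq_zero_and_fderiv_eq_zero_of_le_norm [NormedSpace ℝ E] {ξ : E → ℝ}
    (hξ : HasCompactSupport ξ) (c : ℝ) :
    ∃ b, c ≤ b ∧ ∀ x, b ≤ ‖x‖ → ξ x = 0 ∧ fderiv ℝ ξ x = 0 := by
  obtain ⟨R, hR⟩ := hξ.isCompact.isBounded.subset_ball 0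
  refine ⟨max c R, le_max_left c R, fun x hx => ?_⟩
  have hx : x ∉ tsupport ξ := fun hmem =>
    (mem_ball_zero_iff.1 (hR hmem)).not_ge ((le_max_right c R).trans hx)
  exact ⟨image_eq_zero_of_notMem_tsupport hx, fderiv_of_notMem_tsupport ℝ hx⟩

end OuterRadius

theorem stmt7_general {E : Type*} [NormedAddCommGroup E] [NormedSpace ℝ E]
    [FiniteDimensional ℝ E] [MeasurableSpace E] [BorelSpace E] (μ : Measure E)
    [μ.IsAddHaarMeasure] {n : ℕ} (hE : finrank ℝ E = n + 1) (hn : 0 < n) {μ₁ μ₂ : ℝ}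
    (hμ₁ : -1 < μ₁) (hμ₂ : 0 < μ₂) :
    ∃ C > (0 : ℝ), ∀ α ≤ (n : ℝ), ∀ t : ℝ, 0 ≤ t → ∀ (R₁ : ℝ) (R₂ : ℝ≥0∞), 0 ≤ R₁ →
      ENNReal.ofReal R₁ ≤ R₂ → ∀ ξ : E → ℝ, ContDiff ℝ 1 ξ → (R₂ = ⊤ → HasCompactSupport ξ) →
      (∫ x in sphere 0 R₁, nwt μ₁ μ₂ (R₁ - t) * ξ x ^ 2 * (1 + t + R₁) ^ (-α) ∂μH[n]) +
          (∫ x in {x : E | min R₁ t ≤ ‖x‖ ∧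
              ENNReal.ofReal ‖x‖ ≤ min R₂ (ENNReal.ofReal t)},
            ξ x ^ 2 * (1 + |‖x‖ - t|) ^ (-2 - μ₁) * (1 + t + ‖x‖) ^ (-α) ∂μ) +
          (∫ x in {x : E | max R₁ t ≤ ‖x‖ ∧
              ENNReal.ofReal ‖x‖ ≤ max R₂ (ENNReal.ofReal t)},
            ξ x ^ 2 * (1 + |‖x‖ - t|) ^ (μ₂ - 1) * (1 + t + ‖x‖) ^ (-α) ∂μ) ≤
        C * ((if R₂ = ⊤ then 0 else ∫ x in sphere 0 R₂.toReal,
            nwt μ₁ μ₂ (R₂.toReal - t) * ξ x ^ 2 * (1 + t + R₂.toReal) ^ (-α) ∂μH[n]) +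
          (∫ x in {x : E | min R₁ t ≤ ‖x‖ ∧
              ENNReal.ofReal ‖x‖ ≤ min R₂ (ENNReal.ofReal t)},
            fderiv ℝ ξ x (‖x‖⁻¹ • x) ^ 2 * (1 + |‖x‖ - t|) ^ (-μ₁) *
              (1 + t + ‖x‖) ^ (-α) ∂μ) +
          (∫ x in {x : E | max R₁ t ≤ ‖x‖ ∧
              ENNReal.ofReal ‖x‖ ≤ max R₂ (ENNReal.ofReal t)},
            fderiv ℝ ξ x (‖x‖⁻¹ • x) ^ 2 * (1 + |‖x‖ - t|) ^ (1 + μ₂) *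
              (1 + t + ‖x‖) ^ (-α) ∂μ)) := by
  obtain ⟨C, hC, hHardy⟩ := exists_integral_lightConeWeight_hardy μ hE hn hμ₁ hμ₂
  refine ⟨C, hC, fun α hα t ht R₁ R₂ hR₁ hR ξ hξ hsupp => ?_⟩
  rcases eq_or_ne R₂ ⊤ with rfl | htop
  · obtain ⟨b, hb, hzero⟩ := exists_eq_zero_and_fderiv_eq_zero_of_le_norm (hsupp rfl) (max R₁ t)
    have hbt : t ≤ b := (le_max_right _ _).trans hb
    have hle := hHardy α t R₁ b hα ht hR₁ ((le_max_left _ _).trans hb) ξ hξ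
    have hsphere :
        ∫ x in sphere 0 b, nwt μ₁ μ₂ (b - t) * ξ x ^ 2 * (1 + t + b) ^ (-α) ∂μH[n] = 0 :=
      setIntegral_eq_zero_of_forall_eq_zero fun x hx => by
        simp [(hzero x (mem_sphere_zero_iff_norm.1 hx).ge).1]
    rw [hsphere, min_eq_right hbt, max_eq_left hbt] at hle
    rwa [if_pos rfl, min_eq_right le_top, max_eq_left le_top, setOf_ofReal_norm_le_ofReal _ ht,
      setIntegral_ofReal_norm_le_top μ (d := b) fun x hx => by simp [(hzero x hx).1],
      setIntegral_ofReal_norm_le_top μ (d := b) fun x hx => by simp [(hzero x hx).2]]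
  · lift R₂ to ℝ≥0 using htop
    have hR' : R₁ ≤ R₂ := ENNReal.ofReal_le_coe.1 hR
    rw [if_neg ENNReal.coe_ne_top, ENNReal.coe_toReal, ← ENNReal.ofReal_coe_nnreal,
      ← ENNReal.ofReal_min, ← ENNReal.ofReal_max,
      setOf_ofReal_norm_le_ofReal _ (le_min R₂.coe_nonneg ht),
      setOf_ofReal_norm_le_ofReal _ (le_max_of_le_right ht)]
    exact hHardy α t R₁ R₂ hα ht hR₁ hR' ξ hξ

/-- Localized weighted Hardy inequality on `ℝ³`, with boundary sphere
terms at radii `R₁` and `R₂` (the latter possibly `∞`, in which case the corresponding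
sphere term is omitted and `ξ` is assumed compactly supported), and annular bulk terms
split at radius `t`.  The constant depends only on `μ₁, μ₂`. -/
theorem stmt7 (μ₁ μ₂ : ℝ) (hμ₁ : -1 < μ₁) (hμ₂ : 0 < μ₂) :
    ∃ C > (0 : ℝ), ∀ α : ℝ, 0 ≤ α → α ≤ 2 → ∀ t : ℝ, 0 ≤ t →
      ∀ (R₁ : ℝ) (R₂ : ℝ≥0∞), 0 ≤ R₁ → ENNReal.ofReal R₁ < R₂ →
      ∀ ξ : EuclideanSpace ℝ (Fin 3) → ℝ, ContDiff ℝ 1 ξ →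
        (R₂ = ⊤ → HasCompactSupport ξ) →
      (∫ x in Metric.sphere (0 : EuclideanSpace ℝ (Fin 3)) R₁,
          nwt μ₁ μ₂ (R₁ - t) * ξ x ^ 2 * (1 + t + R₁) ^ (-α) ∂(μH[2]))
        + (∫ x in {x : EuclideanSpace ℝ (Fin 3) |
              min R₁ t ≤ ‖x‖ ∧ ENNReal.ofReal ‖x‖ ≤ min R₂ (ENNReal.ofReal t)},
            ξ x ^ 2 * (1 + |‖x‖ - t|) ^ (-2 - μ₁) * (1 + t + ‖x‖) ^ (-α))
        + (∫ x in {x : EuclideanSpace ℝ (Fin 3) |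
              max R₁ t ≤ ‖x‖ ∧ ENNReal.ofReal ‖x‖ ≤ max R₂ (ENNReal.ofReal t)},
            ξ x ^ 2 * (1 + |‖x‖ - t|) ^ (μ₂ - 1) * (1 + t + ‖x‖) ^ (-α))
      ≤ C * ((if R₂ = ⊤ then 0 else
              ∫ x in Metric.sphere (0 : EuclideanSpace ℝ (Fin 3)) R₂.toReal,
                nwt μ₁ μ₂ (R₂.toReal - t) * ξ x ^ 2 * (1 + t + R₂.toReal) ^ (-α) ∂(μH[2]))
          + (∫ x in {x : EuclideanSpace ℝ (Fin 3) |
                min R₁ t ≤ ‖x‖ ∧ ENNReal.ofReal ‖x‖ ≤ min R₂ (ENNReal.ofReal t)},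
              radialDeriv ξ x ^ 2 * (1 + |‖x‖ - t|) ^ (-μ₁) * (1 + t + ‖x‖) ^ (-α))
          + (∫ x in {x : EuclideanSpace ℝ (Fin 3) |
                max R₁ t ≤ ‖x‖ ∧ ENNReal.ofReal ‖x‖ ≤ max R₂ (ENNReal.ofReal t)},
              radialDeriv ξ x ^ 2 * (1 + |‖x‖ - t|) ^ (1 + μ₂) * (1 + t + ‖x‖) ^ (-α))) := by
  obtain ⟨C, hC, h⟩ := stmt7_general (volume : Measure (EuclideanSpace ℝ (Fin 3))) (n := 2)
    finrank_euclideanSpace_fin two_pos hμ₁ hμ₂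
  refine ⟨C, hC, fun α _ hα t ht R₁ R₂ hR₁ hR ξ hξ hsupp => ?_⟩
  simpa only [Nat.cast_ofNat, radialDeriv] using
    h α (by exact_mod_cast hα) t ht R₁ R₂ hR₁ hR.le ξ hξ hsupp
end

section
/- (Null-frame decomposition of the energy error terms.) There is a universal constant C such that for every C¹ field H = (H^{αβ}) of symmetric 4×4 matrices on ℝ^{1+3}, every C¹ scalar function ξ, and every point with x ≠ 0, the following four pointwise bounds hold: (i) |(∂_αH^{αβ})∂_βξ ∂_tξ| ≤ C[(|∂H|_{LL} + |∂̄H|)|∂ξ|² + |∂H||∂̄ξ||∂ξ|]; (ii) |(∂_tH^{αβ})∂_αξ ∂_βξ| ≤ C[|∂H|_{LL}|∂ξ|² + |∂H||∂̄ξ||∂ξ|]; (iii) |H^{αβ}∂_αξ ∂_βξ| ≤ C[|H|_{LL}|∂ξ|² + |H||∂̄ξ||∂ξ|]; (iv) |((x_i/r)H^{iβ} − H^{0β})∂_βξ ∂_tξ| ≤ C[|H|_{LL}|∂ξ|² + |H||∂̄ξ||∂ξ|]. -/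
open MeasureTheory

noncomputable def pd (μ : Fin 4) (f : (Fin 4 → ℝ) → ℝ) (x : Fin 4 → ℝ) : ℝ :=
  fderiv ℝ f x (Pi.single μ 1)

noncomputable def pd3 (i : Fin 3) (f : (Fin 3 → ℝ) → ℝ) (x : Fin 3 → ℝ) : ℝ :=
  fderiv ℝ f x (Pi.single i 1)

noncomputable def rad (p : Fin 4 → ℝ) : ℝ := Real.sqrt (∑ i : Fin 3, (p i.succ) ^ 2)

noncomputable def rad3 (y : Fin 3 → ℝ) : ℝ := Real.sqrt (∑ i : Fin 3, (y i) ^ 2)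

noncomputable def spt (t : ℝ) (y : Fin 3 → ℝ) : Fin 4 → ℝ := ![t, y 0, y 1, y 2]

noncomputable def minkVF : Fin 11 → (Fin 4 → ℝ) → Fin 4 → ℝ :=
  ![fun _ => Pi.single 0 1,
    fun _ => Pi.single 1 1,
    fun _ => Pi.single 2 1,
    fun _ => Pi.single 3 1,
    fun p => p 1 • (Pi.single 2 1 : Fin 4 → ℝ) - p 2 • (Pi.single 1 1 : Fin 4 → ℝ),
    fun p => p 1 • (Pi.single 3 1 : Fin 4 → ℝ) - p 3 • (Pi.single 1 1 : Fin 4 → ℝ),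
    fun p => p 2 • (Pi.single 3 1 : Fin 4 → ℝ) - p 3 • (Pi.single 2 1 : Fin 4 → ℝ),
    fun p => p 0 • (Pi.single 1 1 : Fin 4 → ℝ) + p 1 • (Pi.single 0 1 : Fin 4 → ℝ),
    fun p => p 0 • (Pi.single 2 1 : Fin 4 → ℝ) + p 2 • (Pi.single 0 1 : Fin 4 → ℝ),
    fun p => p 0 • (Pi.single 3 1 : Fin 4 → ℝ) + p 3 • (Pi.single 0 1 : Fin 4 → ℝ),
    fun p => p]

noncomputable def GammaList : List (Fin 11) → ((Fin 4 → ℝ) → ℝ) → (Fin 4 → ℝ) → ℝ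
  | [] => fun f p => f p
  | k :: I => fun f p => fderiv ℝ (GammaList I f) p (minkVF k p)

noncomputable def derivNormSq (f : (Fin 4 → ℝ) → ℝ) (p : Fin 4 → ℝ) : ℝ :=
  ∑ μ : Fin 4, (pd μ f p) ^ 2

noncomputable def derivNorm (f : (Fin 4 → ℝ) → ℝ) (p : Fin 4 → ℝ) : ℝ :=
  Real.sqrt (derivNormSq f p)

noncomputable def dS (f : (Fin 4 → ℝ) → ℝ) (p : Fin 4 → ℝ) : ℝ :=
  (1 / 2) * (pd 0 f p + ∑ i : Fin 3, (p i.succ / rad p) * pd i.succ f p)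

noncomputable def dQ (f : (Fin 4 → ℝ) → ℝ) (p : Fin 4 → ℝ) : ℝ :=
  (1 / 2) * ((∑ i : Fin 3, (p i.succ / rad p) * pd i.succ f p) - pd 0 f p)

noncomputable def angSq (f : (Fin 4 → ℝ) → ℝ) (p : Fin 4 → ℝ) : ℝ :=
  (1 / 2) * (∑ i : Fin 3, ∑ j : Fin 3,
    ((p i.succ / rad p) * pd j.succ f p - (p j.succ / rad p) * pd i.succ f p) ^ 2)

noncomputable def goodNormSq (f : (Fin 4 → ℝ) → ℝ) (p : Fin 4 → ℝ) : ℝ :=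
  (dS f p) ^ 2 + angSq f p

noncomputable def goodNorm (f : (Fin 4 → ℝ) → ℝ) (p : Fin 4 → ℝ) : ℝ :=
  Real.sqrt (goodNormSq f p)

noncomputable def gradSq (f : (Fin 4 → ℝ) → ℝ) (p : Fin 4 → ℝ) : ℝ :=
  (pd 0 f p) ^ 2 + ∑ i : Fin 3, (pd i.succ f p) ^ 2

noncomputable def Lup (p : Fin 4 → ℝ) : Fin 4 → ℝ :=
  ![1, p 1 / rad p, p 2 / rad p, p 3 / rad p]

noncomputable def Llow (p : Fin 4 → ℝ) : Fin 4 → ℝ :=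
  ![-1, p 1 / rad p, p 2 / rad p, p 3 / rad p]

noncomputable def Lbup (p : Fin 4 → ℝ) : Fin 4 → ℝ :=
  ![1, -(p 1 / rad p), -(p 2 / rad p), -(p 3 / rad p)]

noncomputable def Evec : Fin 3 → (Fin 4 → ℝ) → Fin 4 → ℝ :=
  ![fun p => (p 2 / rad p) • (Pi.single 3 1 : Fin 4 → ℝ) - (p 3 / rad p) • (Pi.single 2 1 : Fin 4 → ℝ),
    fun p => (p 1 / rad p) • (Pi.single 3 1 : Fin 4 → ℝ) - (p 3 / rad p) • (Pi.single 1 1 : Fin 4 → ℝ),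
    fun p => (p 1 / rad p) • (Pi.single 2 1 : Fin 4 → ℝ) - (p 2 / rad p) • (Pi.single 1 1 : Fin 4 → ℝ)]

noncomputable def frameVF : Fin 5 → (Fin 4 → ℝ) → Fin 4 → ℝ :=
  ![Lup, Lbup, Evec 0, Evec 1, Evec 2]

noncomputable def mInv : Fin 4 → Fin 4 → ℝ :=
  fun α β => if α = β then (if α = 0 then -1 else 1) else 0

noncomputable def wgt (γ q : ℝ) : ℝ :=
  if 0 ≤ q then 1 + (1 + |q|) ^ (1 + 2 * γ) else 1 + (1 + |q|) ^ (-(γ / 2))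

noncomputable def wgt' (γ q : ℝ) : ℝ :=
  if 0 ≤ q then (1 + 2 * γ) * (1 + |q|) ^ (2 * γ) else (γ / 2) * (1 + |q|) ^ (-(γ / 2) - 1)

noncomputable def matNorm (H : (Fin 4 → ℝ) → Fin 4 → Fin 4 → ℝ) (p : Fin 4 → ℝ) : ℝ :=
  Real.sqrt (∑ α : Fin 4, ∑ β : Fin 4, (H p α β) ^ 2)

noncomputable def matLL (H : (Fin 4 → ℝ) → Fin 4 → Fin 4 → ℝ) (p : Fin 4 → ℝ) : ℝ :=
  |∑ α : Fin 4, ∑ β : Fin 4, H p α β * Llow p α * Llow p β|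

noncomputable def dmatNorm (H : (Fin 4 → ℝ) → Fin 4 → Fin 4 → ℝ) (p : Fin 4 → ℝ) : ℝ :=
  Real.sqrt (∑ c : Fin 4, ∑ α : Fin 4, ∑ β : Fin 4, (pd c (fun y => H y α β) p) ^ 2)

noncomputable def dmatLL (H : (Fin 4 → ℝ) → Fin 4 → Fin 4 → ℝ) (p : Fin 4 → ℝ) : ℝ :=
  Real.sqrt (∑ u : Fin 5,
    (∑ α : Fin 4, ∑ β : Fin 4,
      fderiv ℝ (fun y => H y α β) p (frameVF u p) * Llow p α * Llow p β) ^ 2)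

noncomputable def gdmatNorm (H : (Fin 4 → ℝ) → Fin 4 → Fin 4 → ℝ) (p : Fin 4 → ℝ) : ℝ :=
  Real.sqrt (∑ α : Fin 4, ∑ β : Fin 4, goodNormSq (fun y => H y α β) p)

/-! In the Euclidean inner product of `ℝ⁴` the gradient splits orthogonally as
`∂ξ = (∂_q ξ) L + e`, where `L = (-1, x/r)`, `∂_q = ½(∂_r - ∂_t)` and
`|e|² = 2(∂_s ξ)² + |∇̸ξ|²`, so that `e` is controlled by `∂̄ξ`. Expanding a contraction
`A^{αβ} ∂_α ξ ∂_β ξ` with this splitting, the only term without a factor `e` is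
`(∂_q ξ)² A^{αβ} L_α L_β`; all the others are estimated by Cauchy–Schwarz. This gives the bounds
(ii)–(iv) with `A = ∂_t H` or `A = H`. For (i) the derivative falling on `H` is split in the same
way: the contraction of `∂_q H` with `L` is of the type of (iv), and the remaining part of the
divergence is bounded by `|∂̄H|`. -/

section Algebra

open Matrix

lemma sqrt_two_le_two : √2 ≤ 2 :=
  Real.sqrt_le_iff.2 ⟨zero_le_two, by norm_num⟩

variable {ι κ : Type*} [Fintype ι] [Fintype κ]

lemma sum_sum_mul_sub_mul_sq {R : Type*} [CommRing R] (a b : ι → R) :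
    ∑ i, ∑ j, (a i * b j - a j * b i) ^ 2
      = 2 * ((∑ i, a i ^ 2) * ∑ i, b i ^ 2 - (∑ i, a i * b i) ^ 2) := by
  have expand (i j : ι) : (a i * b j - a j * b i) ^ 2
      = a i ^ 2 * b j ^ 2 + b i ^ 2 * a j ^ 2 - 2 * ((a i * b i) * (a j * b j)) := by ring
  simp only [expand, Finset.sum_add_distrib, Finset.sum_sub_distrib, ← Finset.mul_sum,
    ← Finset.sum_mul]
  ring

lemma dotProduct_mulVec_eq_sum {R : Type*} [CommSemiring R] (A : Matrix ι κ R) (u : ι → R)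
    (v : κ → R) : u ⬝ᵥ A *ᵥ v = ∑ i, ∑ j, A i j * u i * v j := by
  simp only [dotProduct, mulVec, Finset.mul_sum]
  exact Finset.sum_congr rfl fun i _ => Finset.sum_congr rfl fun j _ => by ring

lemma abs_dotProduct_mulVec_le (A : Matrix ι κ ℝ) (u : ι → ℝ) (v : κ → ℝ) :
    |u ⬝ᵥ A *ᵥ v| ≤ √(∑ i, ∑ j, A i j ^ 2) * √(∑ i, u i ^ 2) * √(∑ j, v j ^ 2) := by
  have cauchy_schwarz := Finset.sum_mul_sq_le_sq_mul_sq (Finset.univ : Finset (ι × κ))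
    (fun z => A z.1 z.2) (fun z => u z.1 * v z.2)
  rw [← Real.sqrt_mul (by positivity), ← Real.sqrt_mul (by positivity)]
  apply Real.abs_le_sqrt
  rw [dotProduct_mulVec_eq_sum, mul_assoc, Finset.sum_mul_sum]
  simpa only [Fintype.sum_prod_type, mul_pow, mul_assoc] using cauchy_schwarz

lemma smul_add_dotProduct_mulVec_smul_add {R : Type*} [CommRing R] (A : Matrix ι ι R) (q : R)
    (l e : ι → R) :
    (q • l + e) ⬝ᵥ A *ᵥ (q • l + e)
      = q ^ 2 * (l ⬝ᵥ A *ᵥ l) + q * (l ⬝ᵥ A *ᵥ e) + e ⬝ᵥ A *ᵥ (q • l + e) := by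
  simp only [add_dotProduct, smul_dotProduct, mulVec_add, mulVec_smul, dotProduct_add,
    dotProduct_smul, smul_eq_mul]
  ring

end Algebra

section NullFrame

variable {p : Fin 4 → ℝ} (f : (Fin 4 → ℝ) → ℝ)

lemma Llow_zero : Llow p 0 = -1 := rfl

lemma Llow_succ (i : Fin 3) : Llow p i.succ = p i.succ / rad p := by
  fin_cases i <;> rfl

lemma sum_div_rad_sq (hp : 0 < rad p) : ∑ i : Fin 3, (p i.succ / rad p) ^ 2 = 1 := by
  have rad_sq : rad p ^ 2 = ∑ i : Fin 3, p i.succ ^ 2 :=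
    Real.sq_sqrt (Finset.sum_nonneg fun _ _ => sq_nonneg _)
  simp only [div_pow, ← Finset.sum_div, ← rad_sq]
  exact div_self (by positivity)

lemma sum_Llow_sq (hp : 0 < rad p) : ∑ α, Llow p α ^ 2 = 2 := by
  simp only [Fin.sum_univ_succ (n := 3), Llow_zero, Llow_succ, sum_div_rad_sq hp]
  norm_num

/-- The coordinate gradient `(∂_α f)(p)`. -/
noncomputable def grad (f : (Fin 4 → ℝ) → ℝ) (p : Fin 4 → ℝ) : Fin 4 → ℝ := fun α => pd α f p

/-- The gradient minus its `∂_q` part: the component of `∂f` built from derivatives tangential to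
the outgoing light cone. -/
noncomputable def tangentialGrad (f : (Fin 4 → ℝ) → ℝ) (p : Fin 4 → ℝ) : Fin 4 → ℝ :=
  grad f p - dQ f p • Llow p

lemma grad_eq_smul_Llow_add : grad f p = dQ f p • Llow p + tangentialGrad f p :=
  (add_sub_cancel _ _).symm

lemma grad_zero_eq_dS_sub_dQ : grad f p 0 = dS f p - dQ f p := by
  simp only [grad, dS, dQ]; ring

lemma sum_div_rad_mul_grad : ∑ i : Fin 3, p i.succ / rad p * grad f p i.succ = dS f p + dQ f p := by
  simp only [grad, dS, dQ]; ring

lemma angSq_eq (hp : 0 < rad p) :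
    angSq f p = ∑ i : Fin 3, grad f p i.succ ^ 2 - (dS f p + dQ f p) ^ 2 := by
  have lagrange := sum_sum_mul_sub_mul_sq (fun i : Fin 3 => p i.succ / rad p)
    (fun i => grad f p i.succ)
  rw [sum_div_rad_sq hp, sum_div_rad_mul_grad, one_mul] at lagrange
  change 1 / 2 * ∑ i : Fin 3, ∑ j : Fin 3,
    (p i.succ / rad p * grad f p j.succ - p j.succ / rad p * grad f p i.succ) ^ 2 = _
  linarith

lemma derivNormSq_eq (hp : 0 < rad p) :
    derivNormSq f p = 2 * dS f p ^ 2 + 2 * dQ f p ^ 2 + angSq f p := by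
  change ∑ α, grad f p α ^ 2 = _
  rw [Fin.sum_univ_succ, grad_zero_eq_dS_sub_dQ, angSq_eq f hp]
  ring

lemma sum_Llow_mul_grad : ∑ α, Llow p α * grad f p α = 2 * dQ f p := by
  simp only [Fin.sum_univ_succ (n := 3), Llow_zero, Llow_succ, sum_div_rad_mul_grad,
    grad_zero_eq_dS_sub_dQ]
  ring

lemma sum_tangentialGrad_sq (hp : 0 < rad p) :
    ∑ α, tangentialGrad f p α ^ 2 = 2 * dS f p ^ 2 + angSq f p := by
  have expand (α : Fin 4) : tangentialGrad f p α ^ 2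
      = grad f p α ^ 2 - 2 * dQ f p * (Llow p α * grad f p α) + dQ f p ^ 2 * Llow p α ^ 2 := by
    simp only [tangentialGrad, Pi.sub_apply, Pi.smul_apply, smul_eq_mul]
    ring
  simp only [expand, Finset.sum_add_distrib, Finset.sum_sub_distrib, ← Finset.mul_sum,
    sum_Llow_mul_grad, sum_Llow_sq hp]
  linarith [derivNormSq_eq f hp, show ∑ α, grad f p α ^ 2 = derivNormSq f p from rfl]

lemma angSq_nonneg (p : Fin 4 → ℝ) : 0 ≤ angSq f p := by
  unfold angSq; positivity

lemma sum_tangentialGrad_sq_le (hp : 0 < rad p) :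
    ∑ α, tangentialGrad f p α ^ 2 ≤ 2 * goodNormSq f p := by
  rw [sum_tangentialGrad_sq f hp, goodNormSq]
  linarith [angSq_nonneg f p]

lemma sqrt_sum_tangentialGrad_sq_le (hp : 0 < rad p) :
    √(∑ α, tangentialGrad f p α ^ 2) ≤ √2 * goodNorm f p := by
  rw [goodNorm, ← Real.sqrt_mul zero_le_two]
  exact Real.sqrt_le_sqrt (sum_tangentialGrad_sq_le f hp)

lemma abs_dQ_le (hp : 0 < rad p) : |dQ f p| ≤ derivNorm f p := by
  refine Real.abs_le_sqrt ?_
  rw [derivNormSq_eq f hp]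
  linarith [sq_nonneg (dS f p), sq_nonneg (dQ f p), angSq_nonneg f p]

lemma abs_grad_le (α : Fin 4) : |grad f p α| ≤ derivNorm f p :=
  Real.abs_le_sqrt <| Finset.single_le_sum (f := fun β => grad f p β ^ 2)
    (fun _ _ => sq_nonneg _) (Finset.mem_univ α)

lemma derivNorm_nonneg (p : Fin 4 → ℝ) : 0 ≤ derivNorm f p := Real.sqrt_nonneg _

lemma goodNorm_nonneg (p : Fin 4 → ℝ) : 0 ≤ goodNorm f p := Real.sqrt_nonneg _

end NullFrame

section Contraction

open Matrix

variable (A : Matrix (Fin 4) (Fin 4) ℝ) (ξ : (Fin 4 → ℝ) → ℝ) {p : Fin 4 → ℝ}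

lemma abs_Llow_dotProduct_mulVec_tangentialGrad_le (hp : 0 < rad p) :
    |Llow p ⬝ᵥ A *ᵥ tangentialGrad ξ p| ≤ 2 * (√(∑ α, ∑ β, A α β ^ 2) * goodNorm ξ p) := by
  calc |Llow p ⬝ᵥ A *ᵥ tangentialGrad ξ p|
      ≤ √(∑ α, ∑ β, A α β ^ 2) * √(∑ α, Llow p α ^ 2) * √(∑ β, tangentialGrad ξ p β ^ 2) :=
        abs_dotProduct_mulVec_le A _ _
    _ ≤ √(∑ α, ∑ β, A α β ^ 2) * √2 * (√2 * goodNorm ξ p) := by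
        rw [sum_Llow_sq hp]
        gcongr
        exact sqrt_sum_tangentialGrad_sq_le ξ hp
    _ = √2 * √2 * (√(∑ α, ∑ β, A α β ^ 2) * goodNorm ξ p) := by ring
    _ = 2 * (√(∑ α, ∑ β, A α β ^ 2) * goodNorm ξ p) := by rw [Real.mul_self_sqrt zero_le_two]

lemma abs_tangentialGrad_dotProduct_mulVec_grad_le (hp : 0 < rad p) :
    |tangentialGrad ξ p ⬝ᵥ A *ᵥ grad ξ p|
      ≤ 2 * (√(∑ α, ∑ β, A α β ^ 2) * goodNorm ξ p * derivNorm ξ p) := by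
  have D_nonneg := derivNorm_nonneg ξ p
  have g_nonneg := goodNorm_nonneg ξ p
  calc |tangentialGrad ξ p ⬝ᵥ A *ᵥ grad ξ p|
      ≤ √(∑ α, ∑ β, A α β ^ 2) * √(∑ α, tangentialGrad ξ p α ^ 2) * derivNorm ξ p :=
        abs_dotProduct_mulVec_le A _ _
    _ ≤ √(∑ α, ∑ β, A α β ^ 2) * (√2 * goodNorm ξ p) * derivNorm ξ p := by
        gcongr
        exact sqrt_sum_tangentialGrad_sq_le ξ hp
    _ = √2 * (√(∑ α, ∑ β, A α β ^ 2) * goodNorm ξ p * derivNorm ξ p) := by ring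
    _ ≤ 2 * (√(∑ α, ∑ β, A α β ^ 2) * goodNorm ξ p * derivNorm ξ p) := by
        gcongr
        exact sqrt_two_le_two

theorem abs_grad_dotProduct_mulVec_grad_le (hp : 0 < rad p) :
    |grad ξ p ⬝ᵥ A *ᵥ grad ξ p|
      ≤ 4 * (|Llow p ⬝ᵥ A *ᵥ Llow p| * derivNorm ξ p ^ 2
        + √(∑ α, ∑ β, A α β ^ 2) * goodNorm ξ p * derivNorm ξ p) := by
  set N := √(∑ α, ∑ β, A α β ^ 2)
  set q := dQ ξ p
  set e := tangentialGrad ξ p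
  have D_nonneg := derivNorm_nonneg ξ p
  have split : grad ξ p ⬝ᵥ A *ᵥ grad ξ p
      = q ^ 2 * (Llow p ⬝ᵥ A *ᵥ Llow p) + q * (Llow p ⬝ᵥ A *ᵥ e) + e ⬝ᵥ A *ᵥ grad ξ p := by
    rw [grad_eq_smul_Llow_add, smul_add_dotProduct_mulVec_smul_add]
  calc |grad ξ p ⬝ᵥ A *ᵥ grad ξ p|
      ≤ |q| ^ 2 * |Llow p ⬝ᵥ A *ᵥ Llow p| + |q| * |Llow p ⬝ᵥ A *ᵥ e| + |e ⬝ᵥ A *ᵥ grad ξ p| := by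
        rw [split, ← abs_pow, ← abs_mul, ← abs_mul]
        exact abs_add_three _ _ _
    _ ≤ derivNorm ξ p ^ 2 * |Llow p ⬝ᵥ A *ᵥ Llow p| + derivNorm ξ p * (2 * (N * goodNorm ξ p))
        + 2 * (N * goodNorm ξ p * derivNorm ξ p) := by
        gcongr
        · exact abs_dQ_le ξ hp
        · exact abs_dQ_le ξ hp
        · exact abs_Llow_dotProduct_mulVec_tangentialGrad_le A ξ hp
        · exact abs_tangentialGrad_dotProduct_mulVec_grad_le A ξ hp
    _ ≤ 4 * (|Llow p ⬝ᵥ A *ᵥ Llow p| * derivNorm ξ p ^ 2 + N * goodNorm ξ p * derivNorm ξ p) := by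
        linarith [show 0 ≤ |Llow p ⬝ᵥ A *ᵥ Llow p| * derivNorm ξ p ^ 2 by positivity]

theorem abs_Llow_dotProduct_mulVec_grad_mul_le (hp : 0 < rad p) :
    |(Llow p ⬝ᵥ A *ᵥ grad ξ p) * grad ξ p 0|
      ≤ 4 * (|Llow p ⬝ᵥ A *ᵥ Llow p| * derivNorm ξ p ^ 2
        + √(∑ α, ∑ β, A α β ^ 2) * goodNorm ξ p * derivNorm ξ p) := by
  set N := √(∑ α, ∑ β, A α β ^ 2)
  set q := dQ ξ p
  set e := tangentialGrad ξ p
  have D_nonneg := derivNorm_nonneg ξ p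
  have g_nonneg := goodNorm_nonneg ξ p
  have split : Llow p ⬝ᵥ A *ᵥ grad ξ p
      = q * (Llow p ⬝ᵥ A *ᵥ Llow p) + Llow p ⬝ᵥ A *ᵥ e := by
    rw [grad_eq_smul_Llow_add, mulVec_add, mulVec_smul, dotProduct_add, dotProduct_smul,
      smul_eq_mul]
  calc |(Llow p ⬝ᵥ A *ᵥ grad ξ p) * grad ξ p 0|
      ≤ (|q| * |Llow p ⬝ᵥ A *ᵥ Llow p| + |Llow p ⬝ᵥ A *ᵥ e|) * |grad ξ p 0| := by
        rw [abs_mul, split, ← abs_mul q]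
        gcongr
        exact abs_add_le _ _
    _ ≤ (derivNorm ξ p * |Llow p ⬝ᵥ A *ᵥ Llow p| + 2 * (N * goodNorm ξ p)) * derivNorm ξ p := by
        gcongr
        · exact abs_dQ_le ξ hp
        · exact abs_Llow_dotProduct_mulVec_tangentialGrad_le A ξ hp
        · exact abs_grad_le ξ 0
    _ ≤ 4 * (|Llow p ⬝ᵥ A *ᵥ Llow p| * derivNorm ξ p ^ 2 + N * goodNorm ξ p * derivNorm ξ p) := by
        linarith [show 0 ≤ |Llow p ⬝ᵥ A *ᵥ Llow p| * derivNorm ξ p ^ 2 by positivity,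
          show 0 ≤ N * goodNorm ξ p * derivNorm ξ p by positivity]

end Contraction

section MatrixField

open Matrix

variable (H : (Fin 4 → ℝ) → Fin 4 → Fin 4 → ℝ) (p : Fin 4 → ℝ)

lemma fderiv_apply_eq_sum_mul_pd (f : (Fin 4 → ℝ) → ℝ) (v : Fin 4 → ℝ) :
    fderiv ℝ f p v = ∑ μ, v μ * pd μ f p := by
  conv_lhs => rw [pi_eq_sum_univ' v]
  simp only [map_sum, map_smul, smul_eq_mul, pd]

/-- The vector field `∂_q = ½(∂_r - ∂_t) = -½ L̲`, so that `dQ` is the derivative along it. -/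
noncomputable def Qup (p : Fin 4 → ℝ) : Fin 4 → ℝ := (-1 / 2 : ℝ) • Lbup p

lemma fderiv_Qup (f : (Fin 4 → ℝ) → ℝ) : fderiv ℝ f p (Qup p) = dQ f p := by
  rw [fderiv_apply_eq_sum_mul_pd, Fin.sum_univ_four, dQ, Fin.sum_univ_three]
  simp only [Qup, Lbup, Pi.smul_apply, smul_eq_mul, cons_val, Fin.succ_zero_eq_one,
    Fin.succ_one_eq_two, show (Fin.succ 2 : Fin 4) = 3 from rfl]
  ring

/-- The entrywise derivative `v^γ ∂_γ H^{αβ}(p)` of a matrix field in the direction `v`. -/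
noncomputable def matDeriv (H : (Fin 4 → ℝ) → Fin 4 → Fin 4 → ℝ) (p v : Fin 4 → ℝ) :
    Matrix (Fin 4) (Fin 4) ℝ :=
  of fun α β => fderiv ℝ (fun y => H y α β) p v

lemma matDeriv_add (v w : Fin 4 → ℝ) : matDeriv H p (v + w) = matDeriv H p v + matDeriv H p w := by
  ext; exact (fderiv ℝ _ p).map_add v w

lemma matDeriv_smul (c : ℝ) (v : Fin 4 → ℝ) : matDeriv H p (c • v) = c • matDeriv H p v := by
  ext; exact (fderiv ℝ _ p).map_smul c v

lemma sqrt_sum_matDeriv_sq_le (v : Fin 4 → ℝ) :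
    √(∑ α, ∑ β, matDeriv H p v α β ^ 2) ≤ √(∑ μ, v μ ^ 2) * dmatNorm H p := by
  rw [dmatNorm, ← Real.sqrt_mul (by positivity)]
  refine Real.sqrt_le_sqrt ?_
  calc ∑ α, ∑ β, matDeriv H p v α β ^ 2
      ≤ ∑ α, ∑ β, (∑ μ, v μ ^ 2) * ∑ μ, pd μ (fun y => H y α β) p ^ 2 := by
        gcongr with α _ β _
        simp only [matDeriv, of_apply, fderiv_apply_eq_sum_mul_pd]
        exact Finset.sum_mul_sq_le_sq_mul_sq _ _ _
    _ = (∑ μ, v μ ^ 2) * ∑ μ, ∑ α, ∑ β, pd μ (fun y => H y α β) p ^ 2 := by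
        simp only [← Finset.mul_sum]
        exact congrArg _ (Finset.sum_comm.trans (Finset.sum_congr rfl fun _ _ =>
          Finset.sum_comm)).symm

lemma abs_Llow_dotProduct_matDeriv_frameVF_mulVec_Llow_le (u : Fin 5) :
    |Llow p ⬝ᵥ matDeriv H p (frameVF u p) *ᵥ Llow p| ≤ dmatLL H p := by
  rw [dotProduct_mulVec_eq_sum]
  exact Real.abs_le_sqrt <| Finset.single_le_sum
    (f := fun u => (∑ α, ∑ β, matDeriv H p (frameVF u p) α β * Llow p α * Llow p β) ^ 2)
    (fun _ _ => sq_nonneg _) (Finset.mem_univ u)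

lemma abs_Llow_dotProduct_matDeriv_mulVec_Llow_le (a b : ℝ) :
    |Llow p ⬝ᵥ matDeriv H p (a • Lup p + b • Lbup p) *ᵥ Llow p| ≤ (|a| + |b|) * dmatLL H p := by
  rw [matDeriv_add, matDeriv_smul, matDeriv_smul, add_mulVec, smul_mulVec, smul_mulVec,
    dotProduct_add, dotProduct_smul, dotProduct_smul, smul_eq_mul, smul_eq_mul, add_mul]
  refine (abs_add_le _ _).trans ?_
  rw [abs_mul, abs_mul]
  gcongr
  · exact abs_Llow_dotProduct_matDeriv_frameVF_mulVec_Llow_le H p 0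
  · exact abs_Llow_dotProduct_matDeriv_frameVF_mulVec_Llow_le H p 1

lemma single_zero_eq_smul_Lup_add_smul_Lbup :
    (Pi.single 0 1 : Fin 4 → ℝ) = (1 / 2 : ℝ) • Lup p + (1 / 2 : ℝ) • Lbup p := by
  rw [← smul_add]
  ext i; fin_cases i <;> simp [Lup, Lbup, one_add_one_eq_two]

lemma abs_Llow_dotProduct_matDeriv_single_zero_mulVec_Llow_le :
    |Llow p ⬝ᵥ matDeriv H p (Pi.single 0 1) *ᵥ Llow p| ≤ dmatLL H p := by
  have bound := abs_Llow_dotProduct_matDeriv_mulVec_Llow_le H p (1 / 2) (1 / 2)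
  rwa [← single_zero_eq_smul_Lup_add_smul_Lbup,
    abs_of_pos (one_half_pos (α := ℝ)), add_halves, one_mul] at bound

lemma abs_Llow_dotProduct_matDeriv_Qup_mulVec_Llow_le :
    |Llow p ⬝ᵥ matDeriv H p (Qup p) *ᵥ Llow p| ≤ dmatLL H p := by
  have bound := abs_Llow_dotProduct_matDeriv_mulVec_Llow_le H p 0 (-1 / 2)
  rw [zero_smul, zero_add, ← Qup] at bound
  refine bound.trans (mul_le_of_le_one_left (Real.sqrt_nonneg _) ?_)
  norm_num [abs_div]

lemma sqrt_sum_matDeriv_single_zero_sq_le :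
    √(∑ α, ∑ β, matDeriv H p (Pi.single 0 1) α β ^ 2) ≤ dmatNorm H p := by
  simpa [Pi.single_apply] using sqrt_sum_matDeriv_sq_le H p (Pi.single 0 1)

/-- The array `(∂_α - L_α ∂_q) H^{αβ}(p)`, without summation over `α`: its column sums are the part
of the divergence `∂_α H^{αβ}` involving only tangential derivatives. -/
noncomputable def tangentialMat (H : (Fin 4 → ℝ) → Fin 4 → Fin 4 → ℝ) (p : Fin 4 → ℝ) :
    Matrix (Fin 4) (Fin 4) ℝ :=
  of fun α β => tangentialGrad (fun y => H y α β) p α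

variable {p}

lemma sqrt_sum_tangentialMat_sq_le (hp : 0 < rad p) :
    √(∑ α, ∑ β, tangentialMat H p α β ^ 2) ≤ √2 * gdmatNorm H p := by
  rw [gdmatNorm, ← Real.sqrt_mul zero_le_two]
  refine Real.sqrt_le_sqrt ?_
  simp only [Finset.mul_sum]
  gcongr with α _ β _
  exact (Finset.single_le_sum (f := fun γ => tangentialGrad (fun y => H y α β) p γ ^ 2)
    (fun _ _ => sq_nonneg _) (Finset.mem_univ α)).trans (sum_tangentialGrad_sq_le _ hp)

lemma sum_Qup_sq_le (hp : 0 < rad p) : ∑ μ, Qup p μ ^ 2 ≤ 1 := by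
  have sum_sq_eq : ∑ μ, Qup p μ ^ 2 = 1 / 4 * ∑ μ, Llow p μ ^ 2 := by
    simp only [Fin.sum_univ_four, Qup, Lbup, Llow, Pi.smul_apply, smul_eq_mul, cons_val]
    ring
  rw [sum_sq_eq, sum_Llow_sq hp]
  norm_num

lemma sqrt_sum_matDeriv_Qup_sq_le (hp : 0 < rad p) :
    √(∑ α, ∑ β, matDeriv H p (Qup p) α β ^ 2) ≤ dmatNorm H p :=
  (sqrt_sum_matDeriv_sq_le H p (Qup p)).trans
    (mul_le_of_le_one_left (Real.sqrt_nonneg _) (Real.sqrt_le_one.2 (sum_Qup_sq_le hp)))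

variable (ξ : (Fin 4 → ℝ) → ℝ)

lemma abs_one_dotProduct_tangentialMat_mulVec_grad_mul_le (hp : 0 < rad p) :
    |(1 ⬝ᵥ tangentialMat H p *ᵥ grad ξ p) * grad ξ p 0|
      ≤ 4 * (gdmatNorm H p * derivNorm ξ p ^ 2) := by
  have D_nonneg := derivNorm_nonneg ξ p
  have G_nonneg : 0 ≤ gdmatNorm H p := Real.sqrt_nonneg _
  have sqrt_sum_one : √(∑ α : Fin 4, (1 : Fin 4 → ℝ) α ^ 2) = 2 := by
    rw [Real.sqrt_eq_iff_mul_self_eq_of_pos two_pos]; norm_num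
  calc |(1 ⬝ᵥ tangentialMat H p *ᵥ grad ξ p) * grad ξ p 0|
      ≤ √(∑ α, ∑ β, tangentialMat H p α β ^ 2) * 2 * derivNorm ξ p * derivNorm ξ p := by
        rw [abs_mul, ← sqrt_sum_one]
        gcongr
        · exact abs_dotProduct_mulVec_le _ _ _
        · exact abs_grad_le ξ 0
    _ ≤ 2 * gdmatNorm H p * 2 * derivNorm ξ p * derivNorm ξ p := by
        gcongr
        exact (sqrt_sum_tangentialMat_sq_le H hp).trans (by gcongr; exact sqrt_two_le_two)
    _ = 4 * (gdmatNorm H p * derivNorm ξ p ^ 2) := by ring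

lemma pd_eq_matDeriv_Qup_mul_Llow_add (α β : Fin 4) :
    pd α (fun y => H y α β) p = matDeriv H p (Qup p) α β * Llow p α + tangentialMat H p α β := by
  simp only [matDeriv, of_apply, fderiv_Qup, tangentialMat]
  exact congrFun (grad_eq_smul_Llow_add fun y => H y α β) α

lemma sum_divergence_mul_grad_eq :
    ∑ β : Fin 4, (∑ α : Fin 4, pd α (fun y => H y α β) p) * pd β ξ p * pd 0 ξ p
      = (Llow p ⬝ᵥ matDeriv H p (Qup p) *ᵥ grad ξ p) * grad ξ p 0
        + (1 ⬝ᵥ tangentialMat H p *ᵥ grad ξ p) * grad ξ p 0 := by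
  simp only [pd_eq_matDeriv_Qup_mul_Llow_add, dotProduct_mulVec_eq_sum, Pi.one_apply, mul_one,
    ← Finset.sum_mul, ← add_mul, ← Finset.sum_add_distrib]
  simp only [Finset.sum_mul]
  exact Finset.sum_comm

theorem abs_sum_divergence_mul_grad_le (hp : 0 < rad p) :
    |∑ β : Fin 4, (∑ α : Fin 4, pd α (fun y => H y α β) p) * pd β ξ p * pd 0 ξ p|
      ≤ 4 * ((dmatLL H p + gdmatNorm H p) * derivNorm ξ p ^ 2
        + dmatNorm H p * goodNorm ξ p * derivNorm ξ p) := by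
  have D_nonneg := derivNorm_nonneg ξ p
  have g_nonneg := goodNorm_nonneg ξ p
  rw [sum_divergence_mul_grad_eq]
  calc _ ≤ |(Llow p ⬝ᵥ matDeriv H p (Qup p) *ᵥ grad ξ p) * grad ξ p 0|
        + |(1 ⬝ᵥ tangentialMat H p *ᵥ grad ξ p) * grad ξ p 0| := abs_add_le _ _
    _ ≤ 4 * (dmatLL H p * derivNorm ξ p ^ 2 + dmatNorm H p * goodNorm ξ p * derivNorm ξ p)
        + 4 * (gdmatNorm H p * derivNorm ξ p ^ 2) := by
        refine add_le_add ?_ (abs_one_dotProduct_tangentialMat_mulVec_grad_mul_le H ξ hp)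
        refine (abs_Llow_dotProduct_mulVec_grad_mul_le _ ξ hp).trans ?_
        gcongr
        · exact abs_Llow_dotProduct_matDeriv_Qup_mulVec_Llow_le H p
        · exact sqrt_sum_matDeriv_Qup_sq_le H hp
    _ = _ := by ring

theorem abs_sum_pd_zero_mul_grad_mul_grad_le (hp : 0 < rad p) :
    |∑ α : Fin 4, ∑ β : Fin 4, pd 0 (fun y => H y α β) p * pd α ξ p * pd β ξ p|
      ≤ 4 * (dmatLL H p * derivNorm ξ p ^ 2
        + dmatNorm H p * goodNorm ξ p * derivNorm ξ p) := by
  have D_nonneg := derivNorm_nonneg ξ p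
  have g_nonneg := goodNorm_nonneg ξ p
  have bound := abs_grad_dotProduct_mulVec_grad_le (matDeriv H p (Pi.single 0 1)) ξ hp
  rw [dotProduct_mulVec_eq_sum _ (grad ξ p)] at bound
  refine bound.trans ?_
  gcongr
  · exact abs_Llow_dotProduct_matDeriv_single_zero_mulVec_Llow_le H p
  · exact sqrt_sum_matDeriv_single_zero_sq_le H p

theorem abs_sum_mul_grad_mul_grad_le (hp : 0 < rad p) :
    |∑ α : Fin 4, ∑ β : Fin 4, H p α β * pd α ξ p * pd β ξ p|
      ≤ 4 * (matLL H p * derivNorm ξ p ^ 2 + matNorm H p * goodNorm ξ p * derivNorm ξ p) := by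
  have bound := abs_grad_dotProduct_mulVec_grad_le (of (H p)) ξ hp
  rwa [dotProduct_mulVec_eq_sum, dotProduct_mulVec_eq_sum] at bound

theorem abs_sum_radial_sub_zero_mul_grad_le (hp : 0 < rad p) :
    |∑ β : Fin 4, ((∑ i : Fin 3, (p i.succ / rad p) * H p i.succ β) - H p 0 β)
        * pd β ξ p * pd 0 ξ p|
      ≤ 4 * (matLL H p * derivNorm ξ p ^ 2 + matNorm H p * goodNorm ξ p * derivNorm ξ p) := by
  have bound := abs_Llow_dotProduct_mulVec_grad_mul_le (of (H p)) ξ hp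
  have contraction (β : Fin 4) : (∑ i : Fin 3, (p i.succ / rad p) * H p i.succ β) - H p 0 β
      = ∑ α, H p α β * Llow p α := by
    simp only [Fin.sum_univ_succ (n := 3), Llow_zero, Llow_succ, mul_comm (H p _ β)]
    ring
  rw [dotProduct_mulVec_eq_sum, dotProduct_mulVec_eq_sum, Finset.sum_comm, Finset.sum_mul] at bound
  simp only [contraction, Finset.sum_mul] at bound ⊢
  exact bound

end MatrixField

theorem stmt9_general :
    ∃ C > (0 : ℝ),
      ∀ H : (Fin 4 → ℝ) → Fin 4 → Fin 4 → ℝ, ∀ ξ : (Fin 4 → ℝ) → ℝ,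
      ∀ p : Fin 4 → ℝ, 0 < rad p →
        (∀ α β : Fin 4, DifferentiableAt ℝ (fun y => H y α β) p) → DifferentiableAt ℝ ξ p →
        (|∑ β : Fin 4, (∑ α : Fin 4, pd α (fun y => H y α β) p) * pd β ξ p * pd 0 ξ p|
            ≤ C * ((dmatLL H p + gdmatNorm H p) * derivNorm ξ p ^ 2
                + dmatNorm H p * goodNorm ξ p * derivNorm ξ p))
        ∧ (|∑ α : Fin 4, ∑ β : Fin 4, pd 0 (fun y => H y α β) p * pd α ξ p * pd β ξ p|
            ≤ C * (dmatLL H p * derivNorm ξ p ^ 2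
                + dmatNorm H p * goodNorm ξ p * derivNorm ξ p))
        ∧ (|∑ α : Fin 4, ∑ β : Fin 4, H p α β * pd α ξ p * pd β ξ p|
            ≤ C * (matLL H p * derivNorm ξ p ^ 2
                + matNorm H p * goodNorm ξ p * derivNorm ξ p))
        ∧ (|∑ β : Fin 4,
              ((∑ i : Fin 3, (p i.succ / rad p) * H p i.succ β) - H p 0 β)
                * pd β ξ p * pd 0 ξ p|
            ≤ C * (matLL H p * derivNorm ξ p ^ 2
                + matNorm H p * goodNorm ξ p * derivNorm ξ p)) :=
  ⟨4, four_pos, fun H ξ _ hp _ _ => ⟨abs_sum_divergence_mul_grad_le H ξ hp,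
    abs_sum_pd_zero_mul_grad_mul_grad_le H ξ hp, abs_sum_mul_grad_mul_grad_le H ξ hp,
    abs_sum_radial_sub_zero_mul_grad_le H ξ hp⟩⟩

/-- Null-frame decomposition of the energy error terms: there is a
universal constant `C` such that for every `C¹` symmetric matrix field `H`, every `C¹`
scalar `ξ` and every point with `x ≠ 0`, the four pointwise bounds (i)–(iv) hold. -/
theorem stmt9 :
    ∃ C > (0 : ℝ),
      ∀ H : (Fin 4 → ℝ) → Fin 4 → Fin 4 → ℝ,
        (∀ p : Fin 4 → ℝ, ∀ α β : Fin 4, H p α β = H p β α) →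
        (∀ α β : Fin 4, ContDiff ℝ 1 fun p => H p α β) →
      ∀ ξ : (Fin 4 → ℝ) → ℝ, ContDiff ℝ 1 ξ →
      ∀ p : Fin 4 → ℝ, 0 < rad p →
        (|∑ β : Fin 4, (∑ α : Fin 4, pd α (fun y => H y α β) p) * pd β ξ p * pd 0 ξ p|
            ≤ C * ((dmatLL H p + gdmatNorm H p) * derivNorm ξ p ^ 2
                + dmatNorm H p * goodNorm ξ p * derivNorm ξ p))
        ∧ (|∑ α : Fin 4, ∑ β : Fin 4, pd 0 (fun y => H y α β) p * pd α ξ p * pd β ξ p|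
            ≤ C * (dmatLL H p * derivNorm ξ p ^ 2
                + dmatNorm H p * goodNorm ξ p * derivNorm ξ p))
        ∧ (|∑ α : Fin 4, ∑ β : Fin 4, H p α β * pd α ξ p * pd β ξ p|
            ≤ C * (matLL H p * derivNorm ξ p ^ 2
                + matNorm H p * goodNorm ξ p * derivNorm ξ p))
        ∧ (|∑ β : Fin 4,
              ((∑ i : Fin 3, (p i.succ / rad p) * H p i.succ β) - H p 0 β)
                * pd β ξ p * pd 0 ξ p|
            ≤ C * (matLL H p * derivNorm ξ p ^ 2
                + matNorm H p * goodNorm ξ p * derivNorm ξ p)) := by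
  obtain ⟨C, C_pos, bounds⟩ := stmt9_general
  exact ⟨C, C_pos, fun H _ hH ξ hξ p hp => bounds H ξ p hp
    (fun α β => (hH α β).contDiffAt.differentiableAt one_ne_zero)
    (hξ.contDiffAt.differentiableAt one_ne_zero)⟩
end

section
/- (Spacetime bound for the inhomogeneous term.) For each γ ∈ (0,1/8] there exists a constant C such that for all 0 ≤ T ≤ t: ∫_T^t ( ∫_{ℝ³} log⁴(2+τ+|x|) · w(|x|−τ)^{1 − 2γ/(1+2γ)} / ((1+τ+|x|)⁴ (1+||x|−τ|)²) dx )^{1/2} dτ ≤ C log⁴(2+t). -/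
open MeasureTheory

/-!
Put `L = log (2 + τ)`. In polar coordinates the Jacobian `r²` absorbs two of the four powers of
`1 + s`, and `w(q)^{1/(1+2γ)} ≲ 1 + |q|` absorbs one of the two powers of `1 + |q|`, so that
`‖𝔦 w^{1/2}‖²` is at most a multiple of `∫ log⁴(2+s) (2+s)⁻² (1+|q|)⁻¹ dr`. The factor `(1+|q|)⁻¹`
just fails to be integrable. Since `1 + |q| ≤ 2 + s`, it may be traded for
`(2+s)^ε (1+|q|)^{-1-ε}`, whose integral costs `2/ε`; with `ε = 1/L` the loss at `s = τ` is only
`(2+τ)^ε = e`. Hence `‖𝔦 w^{1/2}‖² ≲ L⁵ (2+τ)⁻² ≲ L⁶ (2+τ)⁻²`, and `L³/(2+τ)` is a multiple of the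
derivative of `L⁴`.
-/

open Real Set

section LogEstimates

lemma two_thirds_le_log {x : ℝ} (hx : 2 ≤ x) : 2 / 3 ≤ log x := by
  have : log 2 ≤ log x := log_le_log two_pos hx
  linarith [log_two_gt_d9]

lemma log_mul_le_log_add_inv_mul_rpow {x y δ : ℝ} (hx : 1 ≤ x) (hy : 1 ≤ y) (hδ : 0 < δ) :
    log (x * y) ≤ (log x + δ⁻¹) * y ^ δ := by
  have hlogx : log x ≤ log x * y ^ δ :=
    le_mul_of_one_le_right (log_nonneg hx) (one_le_rpow hy hδ.le)
  have hlogy : log y ≤ y ^ δ / δ := log_le_rpow_div (by positivity) hδ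
  calc log (x * y) = log x + log y := log_mul (by positivity) (by positivity)
    _ ≤ log x * y ^ δ + y ^ δ / δ := add_le_add hlogx hlogy
    _ = (log x + δ⁻¹) * y ^ δ := by ring

lemma log_mul_pow_four_le {x y : ℝ} (hx : 2 ≤ x) (hy : 1 ≤ y) :
    log (x * y) ^ 4 ≤ (13 * log x) ^ 4 * y ^ (1 / 2 : ℝ) := by
  have hlog : log (x * y) ≤ 13 * log x * y ^ (1 / 8 : ℝ) :=
    calc log (x * y) ≤ (log x + (1 / 8)⁻¹) * y ^ (1 / 8 : ℝ) :=
          log_mul_le_log_add_inv_mul_rpow (by linarith) hy (by norm_num)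
      _ ≤ 13 * log x * y ^ (1 / 8 : ℝ) := by
          gcongr
          linarith [two_thirds_le_log hx]
  calc log (x * y) ^ 4 ≤ (13 * log x * y ^ (1 / 8 : ℝ)) ^ 4 := by
        gcongr
        exact log_nonneg (by nlinarith)
    _ = (13 * log x) ^ 4 * y ^ (1 / 2 : ℝ) := by
        rw [mul_pow, ← rpow_mul_natCast (by positivity)]
        norm_num

lemma inv_le_rpow_mul_rpow {q s ε : ℝ} (hq : 0 < q) (hqs : q ≤ s) (hε : 0 ≤ ε) :
    q⁻¹ ≤ s ^ ε * q ^ (-(1 + ε)) :=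
  calc q⁻¹ = q ^ ε * q ^ (-(1 + ε)) := by
        rw [← rpow_add hq, ← rpow_neg_one]
        ring_nf
    _ ≤ s ^ ε * q ^ (-(1 + ε)) := by gcongr

/- The exponent `(log x)⁻¹` is at most `3 / 2`, so what is lost by trading `q⁻¹` for an integrable
power is still absorbed by the decay of `s⁻²`. -/
lemma log_pow_four_div_le {x s q : ℝ} (hx : 2 ≤ x) (hxs : x ≤ s) (hq : 0 < q) (hqs : q ≤ s) :
    log s ^ 4 / (s ^ 2 * q) ≤
      exp 1 * (13 * log x) ^ 4 / x ^ 2 * q ^ (-(1 + (log x)⁻¹)) := by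
  have hx0 : 0 < x := by linarith
  obtain ⟨y, hy, rfl⟩ : ∃ y, 1 ≤ y ∧ s = x * y :=
    ⟨s / x, (one_le_div hx0).2 hxs, by field_simp⟩
  have hy0 : 0 < y := by linarith
  have hlog := two_thirds_le_log hx
  set ε := (log x)⁻¹ with hε
  have hε0 : 0 ≤ ε := by positivity
  have hε1 : ε ≤ 3 / 2 := by
    rw [hε, inv_le_comm₀ (by linarith) (by norm_num)]
    linarith
  have hq_inv : q⁻¹ ≤ exp 1 * y ^ (3 / 2 : ℝ) * q ^ (-(1 + ε)) :=
    calc q⁻¹ ≤ (x * y) ^ ε * q ^ (-(1 + ε)) := inv_le_rpow_mul_rpow hq hqs hε0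
      _ = x ^ ε * y ^ ε * q ^ (-(1 + ε)) := by rw [mul_rpow hx0.le hy0.le]
      _ ≤ exp 1 * y ^ (3 / 2 : ℝ) * q ^ (-(1 + ε)) := by
          gcongr
          exact rpow_inv_log_le_exp_one
  have hpow : y ^ (1 / 2 : ℝ) * y ^ (3 / 2 : ℝ) = y ^ 2 := by
    rw [← rpow_add hy0]
    norm_num
  calc log (x * y) ^ 4 / ((x * y) ^ 2 * q) = log (x * y) ^ 4 / (x * y) ^ 2 * q⁻¹ := by
        field_simp
    _ ≤ (13 * log x) ^ 4 * y ^ (1 / 2 : ℝ) / (x * y) ^ 2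
          * (exp 1 * y ^ (3 / 2 : ℝ) * q ^ (-(1 + ε))) := by
        gcongr
        exact log_mul_pow_four_le hx hy
    _ = exp 1 * (13 * log x) ^ 4 / (x * y) ^ 2 * (y ^ (1 / 2 : ℝ) * y ^ (3 / 2 : ℝ))
          * q ^ (-(1 + ε)) := by ring
    _ = exp 1 * (13 * log x) ^ 4 / x ^ 2 * q ^ (-(1 + ε)) := by
        rw [hpow]
        field_simp

end LogEstimates

section Integrals

lemma integrable_one_add_abs_sub_rpow {p : ℝ} (hp : 1 < p) (c : ℝ) :
    Integrable fun x : ℝ ↦ (1 + |x - c|) ^ (-p) := by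
  have h := integrable_one_add_norm (E := ℝ) (μ := volume) (r := p) (by simpa using hp)
  simpa only [norm_eq_abs] using h.comp_sub_right c

lemma integral_Ioi_one_add_rpow {p : ℝ} (hp : 1 < p) :
    ∫ x in Ioi (0 : ℝ), (1 + x) ^ (-p) = 1 / (p - 1) := by
  have hshift := (measurePreserving_add_left (volume : Measure ℝ) 1).setIntegral_preimage_emb
    (measurableEmbedding_addLeft 1) (fun x ↦ x ^ (-p)) (Ioi 1)
  rw [preimage_const_add_Ioi, sub_self] at hshift
  rw [hshift, integral_Ioi_rpow_of_lt (by linarith) one_pos, one_rpow, ← neg_div_neg_eq]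
  ring_nf

lemma integral_one_add_abs_sub_rpow {p : ℝ} (hp : 1 < p) (c : ℝ) :
    ∫ x : ℝ, (1 + |x - c|) ^ (-p) = 2 / (p - 1) := by
  rw [integral_sub_right_eq_self (fun x : ℝ ↦ (1 + |x|) ^ (-p)) c,
    integral_comp_abs (f := fun x ↦ (1 + x) ^ (-p)), integral_Ioi_one_add_rpow hp, mul_one_div]

lemma integral_log_pow_div {a b : ℝ} (n : ℕ) (ha : 0 < a) (hb : 0 < b) :
    ∫ x in a..b, log x ^ n / x = (log b ^ (n + 1) - log a ^ (n + 1)) / (n + 1) := by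
  have hpos : ∀ x ∈ uIcc a b, x ≠ 0 := fun x hx ↦ ((lt_min ha hb).trans_le hx.1).ne'
  have hsubst := intervalIntegral.integral_comp_mul_deriv (a := a) (b := b) (f := log)
    (g := fun u ↦ u ^ n) (fun x hx ↦ hasDerivAt_log (hpos x hx))
    (continuousOn_inv₀.mono hpos) (continuous_pow n)
  simpa only [Function.comp_apply, ← div_eq_mul_inv, integral_pow] using hsubst

lemma rad3_eq_norm (y : Fin 3 → ℝ) : rad3 y = ‖WithLp.toLp 2 y‖ := by
  simp only [rad3, EuclideanSpace.norm_eq, norm_eq_abs, sq_abs]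

lemma integral_comp_rad3 {F : Type*} [NormedAddCommGroup F] [NormedSpace ℝ F] (f : ℝ → F) :
    ∫ y, f (rad3 y) = (4 * π) • ∫ r in Ioi (0 : ℝ), r ^ 2 • f r := by
  have hvol : volume.real (Metric.ball (0 : EuclideanSpace ℝ (Fin 3)) 1) = π * 4 / 3 := by
    rw [measureReal_def, EuclideanSpace.volume_ball_fin_three, ENNReal.ofReal_one, one_pow,
      one_mul, ENNReal.toReal_ofReal (by positivity)]
  calc ∫ y, f (rad3 y) = ∫ y : Fin 3 → ℝ, f ‖WithLp.toLp 2 y‖ := by simp only [rad3_eq_norm]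
    _ = ∫ x : EuclideanSpace ℝ (Fin 3), f ‖x‖ :=
        (PiLp.volume_preserving_toLp (Fin 3)).integral_comp
          (MeasurableEquiv.toLp 2 _).measurableEmbedding fun x ↦ f ‖x‖
    _ = (4 * π) • ∫ r in Ioi (0 : ℝ), r ^ 2 • f r := by
        rw [integral_fun_norm_addHaar, hvol, finrank_euclideanSpace_fin, ← Nat.cast_smul_eq_nsmul ℝ,
          smul_smul]
        congr 1
        push_cast
        ring

end Integrals

section Weight

lemma wgt_nonneg (γ q : ℝ) : 0 ≤ wgt γ q := by
  unfold wgt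
  split_ifs <;> positivity

lemma wgt_le {γ : ℝ} (hγ : 0 ≤ γ) (q : ℝ) : wgt γ q ≤ 2 * (1 + |q|) ^ (1 + 2 * γ) := by
  have hq : 1 ≤ 1 + |q| := by linarith [abs_nonneg q]
  have hone : 1 ≤ (1 + |q|) ^ (1 + 2 * γ) := one_le_rpow hq (by linarith)
  unfold wgt
  split_ifs
  · linarith
  · linarith [rpow_le_one_of_one_le_of_nonpos hq (show -(γ / 2) ≤ 0 by linarith)]

lemma wgt_rpow_le {γ : ℝ} (hγ : 0 ≤ γ) (q : ℝ) :
    wgt γ q ^ (1 - 2 * γ / (1 + 2 * γ)) ≤ 2 * (1 + |q|) := by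
  have hexp : 1 - 2 * γ / (1 + 2 * γ) = (1 + 2 * γ)⁻¹ := by
    field_simp
    ring
  calc wgt γ q ^ (1 - 2 * γ / (1 + 2 * γ)) ≤ (2 * (1 + |q|) ^ (1 + 2 * γ)) ^ (1 + 2 * γ)⁻¹ := by
        rw [hexp]
        exact rpow_le_rpow (wgt_nonneg γ q) (wgt_le hγ q) (by positivity)
    _ = 2 ^ (1 + 2 * γ)⁻¹ * (1 + |q|) := by
        rw [mul_rpow zero_le_two (by positivity), rpow_rpow_inv (by positivity) (by positivity)]
    _ ≤ 2 * (1 + |q|) := by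
        gcongr
        exact rpow_le_self_of_one_le one_le_two (inv_le_one_of_one_le₀ (by linarith))

end Weight

section Inhomogeneity

/-- The density `𝔦² w` of the inhomogeneous term at time `τ` and radius `r`, with the two powers of
`w` combined into one. -/
noncomputable def inhomDensity (γ τ r : ℝ) : ℝ :=
  log (2 + τ + r) ^ 4 * wgt γ (r - τ) ^ (1 - 2 * γ / (1 + 2 * γ))
    / ((1 + τ + r) ^ 4 * (1 + |r - τ|) ^ 2)

lemma inhomDensity_nonneg (γ τ r : ℝ) : 0 ≤ inhomDensity γ τ r := by
  have := rpow_nonneg (wgt_nonneg γ (r - τ)) (1 - 2 * γ / (1 + 2 * γ))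
  unfold inhomDensity
  positivity

lemma sq_mul_inhomDensity_le {γ τ r : ℝ} (hγ : 0 ≤ γ) (hτ : 0 ≤ τ) (hr : 0 ≤ r) :
    r ^ 2 * inhomDensity γ τ r ≤
      8 * (log (2 + τ + r) ^ 4 / ((2 + τ + r) ^ 2 * (1 + |r - τ|))) := by
  have hjacobian : r ^ 2 / (1 + τ + r) ^ 4 ≤ 4 / (2 + τ + r) ^ 2 := by
    rw [div_le_div_iff₀ (by positivity) (by positivity)]
    calc r ^ 2 * (2 + τ + r) ^ 2 ≤ (1 + τ + r) ^ 2 * (2 * (1 + τ + r)) ^ 2 := by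
          gcongr <;> linarith
      _ = 4 * (1 + τ + r) ^ 4 := by ring
  calc r ^ 2 * inhomDensity γ τ r
      = r ^ 2 / (1 + τ + r) ^ 4
          * (log (2 + τ + r) ^ 4 * wgt γ (r - τ) ^ (1 - 2 * γ / (1 + 2 * γ))
              / (1 + |r - τ|) ^ 2) := by
        unfold inhomDensity
        field_simp
    _ ≤ 4 / (2 + τ + r) ^ 2
          * (log (2 + τ + r) ^ 4 * (2 * (1 + |r - τ|)) / (1 + |r - τ|) ^ 2) := by
        gcongr
        · exact div_nonneg (mul_nonneg (by positivity) (rpow_nonneg (wgt_nonneg _ _) _))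
            (by positivity)
        · exact wgt_rpow_le hγ _
    _ = 8 * (log (2 + τ + r) ^ 4 / ((2 + τ + r) ^ 2 * (1 + |r - τ|))) := by
        field_simp
        ring

lemma integral_sq_mul_inhomDensity_le {γ τ : ℝ} (hγ : 0 ≤ γ) (hτ : 0 ≤ τ) :
    ∫ r in Ioi (0 : ℝ), r ^ 2 * inhomDensity γ τ r ≤
      16 * 13 ^ 4 * exp 1 * log (2 + τ) ^ 5 / (2 + τ) ^ 2 := by
  set L := log (2 + τ)
  have hL0 : 0 < L := log_pos (by linarith)
  set p := 1 + L⁻¹ with hp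
  have hp1 : 1 < p := lt_add_of_pos_right 1 (inv_pos.2 hL0)
  set K := 8 * (exp 1 * (13 * L) ^ 4 / (2 + τ) ^ 2) with hK
  have hint : Integrable fun r : ℝ ↦ K * (1 + |r - τ|) ^ (-p) :=
    (integrable_one_add_abs_sub_rpow hp1 τ).const_mul K
  have hpointwise : ∀ r ∈ Ioi (0 : ℝ),
      r ^ 2 * inhomDensity γ τ r ≤ K * (1 + |r - τ|) ^ (-p) := by
    intro r (hr : 0 < r)
    have hqs : 1 + |r - τ| ≤ 2 + τ + r := by
      linarith [abs_le.2 (⟨by linarith, by linarith⟩ : -(τ + r) ≤ r - τ ∧ r - τ ≤ τ + r)]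
    rw [hK, mul_assoc]
    refine (sq_mul_inhomDensity_le hγ hτ hr.le).trans ?_
    gcongr
    exact log_pow_four_div_le (by linarith) (by linarith) (by positivity) hqs
  calc ∫ r in Ioi (0 : ℝ), r ^ 2 * inhomDensity γ τ r
      ≤ ∫ r in Ioi (0 : ℝ), K * (1 + |r - τ|) ^ (-p) :=
        setIntegral_mono_of_nonneg
          (fun r _ ↦ mul_nonneg (sq_nonneg r) (inhomDensity_nonneg γ τ r)) hpointwise
          hint.integrableOn
    _ ≤ ∫ r, K * (1 + |r - τ|) ^ (-p) :=
        setIntegral_le_integral hint (.of_forall fun r ↦ by dsimp only [Pi.zero_apply]; positivity)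
    _ = K * (2 / (p - 1)) := by rw [integral_const_mul, integral_one_add_abs_sub_rpow hp1]
    _ = 16 * 13 ^ 4 * exp 1 * L ^ 5 / (2 + τ) ^ 2 := by
        rw [hK, hp, add_sub_cancel_left, div_inv_eq_mul]
        ring

lemma exists_sqrt_integral_inhomDensity_le : ∃ K > (0 : ℝ), ∀ γ τ : ℝ, 0 ≤ γ → 0 ≤ τ →
    √(∫ y, inhomDensity γ τ (rad3 y)) ≤ K * (log (2 + τ) ^ 3 / (2 + τ)) := by
  refine ⟨√(4 * π * (32 * 13 ^ 4 * exp 1)), by positivity, fun γ τ hγ hτ ↦ ?_⟩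
  have hL : 2 / 3 ≤ log (2 + τ) := two_thirds_le_log (by linarith)
  rw [← sqrt_sq (show 0 ≤ log (2 + τ) ^ 3 / (2 + τ) by positivity), ← sqrt_mul (by positivity)]
  apply sqrt_le_sqrt
  calc ∫ y, inhomDensity γ τ (rad3 y)
      = 4 * π * ∫ r in Ioi (0 : ℝ), r ^ 2 * inhomDensity γ τ r := integral_comp_rad3 _
    _ ≤ 4 * π * (16 * 13 ^ 4 * exp 1 * log (2 + τ) ^ 5 / (2 + τ) ^ 2) := by
        gcongr
        exact integral_sq_mul_inhomDensity_le hγ hτ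
    _ ≤ 4 * π * (16 * 13 ^ 4 * exp 1 * (log (2 + τ) ^ 5 * (2 * log (2 + τ))) / (2 + τ) ^ 2) := by
        gcongr
        exact le_mul_of_one_le_right (by positivity) (by linarith)
    _ = 4 * π * (32 * 13 ^ 4 * exp 1) * (log (2 + τ) ^ 3 / (2 + τ)) ^ 2 := by
        rw [div_pow]
        ring

end Inhomogeneity

theorem stmt12_general : ∃ C > (0 : ℝ), ∀ γ T t : ℝ, 0 ≤ γ → 0 ≤ T → T ≤ t →
    ∫ τ in Icc T t, √(∫ y, inhomDensity γ τ (rad3 y)) ≤ C * log (2 + t) ^ 4 := by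
  obtain ⟨K, hK, hslice⟩ := exists_sqrt_integral_inhomDensity_le
  refine ⟨K / 4, by positivity, fun γ T t hγ hT hTt ↦ ?_⟩
  have hcont : ContinuousOn (fun τ ↦ K * (log (2 + τ) ^ 3 / (2 + τ))) (Icc T t) := by
    have hpos : ∀ τ ∈ Icc T t, 2 + τ ≠ 0 := fun τ hτ ↦ by linarith [hτ.1]
    fun_prop (disch := assumption)
  calc ∫ τ in Icc T t, √(∫ y, inhomDensity γ τ (rad3 y))
      ≤ ∫ τ in Icc T t, K * (log (2 + τ) ^ 3 / (2 + τ)) :=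
        setIntegral_mono_of_nonneg (fun τ _ ↦ sqrt_nonneg _)
          (fun τ hτ ↦ hslice γ τ hγ (hT.trans hτ.1)) hcont.integrableOn_Icc
    _ = K * ∫ τ in T..t, log (2 + τ) ^ 3 / (2 + τ) := by
        rw [integral_const_mul, integral_Icc_eq_integral_Ioc, intervalIntegral.integral_of_le hTt]
    _ = K / 4 * (log (2 + t) ^ 4 - log (2 + T) ^ 4) := by
        rw [intervalIntegral.integral_comp_add_left (fun x ↦ log x ^ 3 / x),
          integral_log_pow_div 3 (by linarith) (by linarith)]
        ring
    _ ≤ K / 4 * log (2 + t) ^ 4 := by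
        gcongr
        exact sub_le_self _ (by positivity)

/-- Spacetime bound for the inhomogeneous term: for `γ ∈ (0,1/8]`
there is a constant `C` with
`∫_T^t ‖𝔦 w^{1/2}‖_{L²(ℝ³)} dτ ≤ C log⁴(2+t)` for all `0 ≤ T ≤ t`, where
`𝔦 = log²(2+s)/((1+s)²(1+|q|) w(q)^{γ/(1+2γ)})`. -/
theorem stmt12 (γ : ℝ) (hγ0 : 0 < γ) (hγ1 : γ ≤ 1 / 8) :
    ∃ C > (0 : ℝ), ∀ T t : ℝ, 0 ≤ T → T ≤ t →
      (∫ τ in Set.Icc T t,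
        Real.sqrt (∫ y : Fin 3 → ℝ,
          (Real.log (2 + τ + rad3 y)) ^ 4
              * (wgt γ (rad3 y - τ)) ^ (1 - 2 * γ / (1 + 2 * γ))
            / ((1 + τ + rad3 y) ^ 4 * (1 + |rad3 y - τ|) ^ 2)))
      ≤ C * (Real.log (2 + t)) ^ 4 := by
  obtain ⟨C, hC, hbound⟩ := stmt12_general
  exact ⟨C, hC, fun T t ↦ hbound γ T t hγ0.le⟩
end

section
/- (Exact wave identity for the approximate mass metric.) Let M ∈ ℝ and let Ω := {x ∈ ℝ³ : |x| > 0 and |x| > 2M}. On Ω, with r = |x|, define for i,j ∈ {1,2,3}: h̃_{ij}(x) := −(4M log(r−2M)/r) δ_{ij} − (x_i x_j/r²)(2M/r − 4M log(r−2M)/r) and G̃^i(x) := −(4M log(r−2M)/r²)(x^i/r). Then for all i,j ∈ {1,2,3} and all x ∈ Ω: Δ h̃_{ij} + ∂_j G̃^i + ∂_i G̃^j = (16M²(r−M)/(r³(r−2M)²))(δ_{ij} − x_i x_j/r²) − 16M² x_i x_j/(r⁵(r−2M)), where Δ = Σ_k ∂_k² is the Euclidean Laplacian on ℝ³. (Since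 h̃ and G̃ are time-independent, this is exactly the statement that ⧠_m h̃_{ij} + m_{iλ}∂_j G̃^λ + m_{jλ}∂_i G̃^λ equals the right-hand side, the key O(M²/r³) cancellation underlying Proposition 5.2 of the paper.) -/
open MeasureTheory

/-- The spatial part `h̃_{ij}` of the approximate mass metric. -/
noncomputable def htil (M : ℝ) (i j : Fin 3) (y : Fin 3 → ℝ) : ℝ :=
  -(4 * M * Real.log (rad3 y - 2 * M) / rad3 y) * (if i = j then 1 else 0)
    - (y i * y j / (rad3 y) ^ 2)
        * (2 * M / rad3 y - 4 * M * Real.log (rad3 y - 2 * M) / rad3 y)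

/-- The gauge source vector `G̃^i`. -/
noncomputable def Gtil (M : ℝ) (i : Fin 3) (y : Fin 3 → ℝ) : ℝ :=
  -(4 * M * Real.log (rad3 y - 2 * M) / (rad3 y) ^ 2) * (y i / rad3 y)

/-!
With `ν(r) = -4M log (r - 2M)` and `μ = 2M`, the tensor is
`h̃ᵢⱼ = (ν / r) δᵢⱼ - ((ν + μ) / r³) xᵢ xⱼ` and the gauge source is `G̃ⁱ = (ν / r³) xⁱ`.
The product rule and Euler's identity for the quadratic `xᵢ xⱼ` give
`Δ (f(r)) = f'' + (2 / r) f'` and `Δ (f(r) xᵢ xⱼ) = (f'' + (6 / r) f') xᵢ xⱼ + 2 f δᵢⱼ`.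
For an arbitrary profile `ν`, the undifferentiated terms of `Δ h̃` and of the symmetrised gradient
of `G̃` then cancel, leaving an expression in `ν'`, `ν''` and `μ`, which are rational in `r`.
-/

section

variable {u v : (Fin 3 → ℝ) → ℝ} {f : ℝ → ℝ} {x : Fin 3 → ℝ}

lemma pd3_congr (h : u =ᶠ[nhds x] v) (k : Fin 3) : pd3 k u x = pd3 k v x := by
  rw [pd3, pd3, h.fderiv_eq]

lemma pd3_sub (hu : DifferentiableAt ℝ u x) (hv : DifferentiableAt ℝ v x) (k : Fin 3) :
    pd3 k (fun y => u y - v y) x = pd3 k u x - pd3 k v x := by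
  simp only [pd3, fderiv_fun_sub hu hv, sub_apply]

lemma pd3_add (hu : DifferentiableAt ℝ u x) (hv : DifferentiableAt ℝ v x) (k : Fin 3) :
    pd3 k (fun y => u y + v y) x = pd3 k u x + pd3 k v x := by
  simp only [pd3, fderiv_fun_add hu hv, add_apply]

lemma pd3_sum {ι : Type*} [Fintype ι] {w : ι → (Fin 3 → ℝ) → ℝ}
    (hw : ∀ l, DifferentiableAt ℝ (w l) x) (k : Fin 3) :
    pd3 k (fun y => ∑ l, w l y) x = ∑ l, pd3 k (w l) x := by
  simp only [pd3, fderiv_fun_sum fun l _ => hw l, sum_apply]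

lemma pd3_mul (hu : DifferentiableAt ℝ u x) (hv : DifferentiableAt ℝ v x) (k : Fin 3) :
    pd3 k (fun y => u y * v y) x = pd3 k u x * v x + u x * pd3 k v x := by
  simp only [pd3, fderiv_fun_mul hu hv, add_apply, smul_apply, smul_eq_mul]
  ring

lemma pd3_const (c : ℝ) (k : Fin 3) : pd3 k (fun _ => c) x = 0 := by
  simp only [pd3, fderiv_fun_const, Pi.zero_apply, zero_apply]

lemma pd3_coord (i k : Fin 3) : pd3 k (fun y => y i) x = if i = k then 1 else 0 := by
  have h : HasFDerivAt (fun y : Fin 3 → ℝ => y i)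
      (ContinuousLinearMap.proj (R := ℝ) (φ := fun _ : Fin 3 => ℝ) i) x :=
    hasFDerivAt_apply i x
  rw [pd3, h.fderiv, ContinuousLinearMap.proj_apply, Pi.single_apply]

lemma pd3_coord_mul_coord (i j k : Fin 3) :
    pd3 k (fun y => y i * y j) x =
      (if i = k then 1 else 0) * x j + x i * if j = k then 1 else 0 := by
  rw [pd3_mul (by fun_prop) (by fun_prop), pd3_coord, pd3_coord]

lemma pd3_comp (hf : DifferentiableAt ℝ f (u x)) (hu : DifferentiableAt ℝ u x) (k : Fin 3) :
    pd3 k (fun y => f (u y)) x = deriv f (u x) * pd3 k u x := by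
  have h := hf.hasDerivAt.comp_hasFDerivAt x hu.hasFDerivAt
  rw [pd3, pd3, show (fun y => f (u y)) = f ∘ u from rfl, h.fderiv, smul_apply, smul_eq_mul]

lemma differentiableAt_deriv {a : ℝ} (hf : ContDiffAt ℝ 2 f a) :
    DifferentiableAt ℝ (deriv f) a :=
  (hf.derivWithin (m := 1) (by norm_num)).differentiableAt one_ne_zero

lemma differentiableAt_pd3 (hu : ContDiffAt ℝ 2 u x) (k : Fin 3) :
    DifferentiableAt ℝ (pd3 k u) x :=
  ((hu.fderiv_right (m := 1) (by norm_num)).differentiableAt (by norm_num)).clm_apply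
    (differentiableAt_const _)

lemma eventually_differentiableAt {E F : Type*} [NormedAddCommGroup E] [NormedSpace ℝ E]
    [NormedAddCommGroup F] [NormedSpace ℝ F] {g : E → F} {a : E} {n : WithTop ℕ∞}
    (hg : ContDiffAt ℝ n g a) (hn : 1 ≤ n) : ∀ᶠ b in nhds a, DifferentiableAt ℝ g b :=
  ((hg.of_le hn).eventually (by simp)).mono fun _ hb => hb.differentiableAt one_ne_zero

/-- The Euclidean Laplacian on `ℝ³`, written with the coordinate derivatives `pd3`. -/
noncomputable def lap3 (u : (Fin 3 → ℝ) → ℝ) (x : Fin 3 → ℝ) : ℝ :=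
  ∑ k : Fin 3, pd3 k (pd3 k u) x

lemma lap3_const (c : ℝ) : lap3 (fun _ => c) x = 0 := by
  have h (k : Fin 3) : pd3 k (fun _ => c) = fun _ => 0 := funext fun _ => pd3_const c k
  simp only [lap3, h, pd3_const, Finset.sum_const_zero]

lemma lap3_sub (hu : ContDiffAt ℝ 2 u x) (hv : ContDiffAt ℝ 2 v x) :
    lap3 (fun y => u y - v y) x = lap3 u x - lap3 v x := by
  simp only [lap3, ← Finset.sum_sub_distrib]
  refine Finset.sum_congr rfl fun k _ => ?_
  rw [← pd3_sub (differentiableAt_pd3 hu k) (differentiableAt_pd3 hv k)]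
  refine pd3_congr ?_ k
  filter_upwards [eventually_differentiableAt hu one_le_two,
    eventually_differentiableAt hv one_le_two] with y hy hy' using pd3_sub hy hy' k

lemma lap3_sum {ι : Type*} [Fintype ι] {w : ι → (Fin 3 → ℝ) → ℝ}
    (hw : ∀ l, ContDiffAt ℝ 2 (w l) x) :
    lap3 (fun y => ∑ l, w l y) x = ∑ l, lap3 (w l) x := by
  simp only [lap3]
  rw [Finset.sum_comm]
  refine Finset.sum_congr rfl fun k _ => ?_
  rw [← pd3_sum fun l => differentiableAt_pd3 (hw l) k]
  refine pd3_congr ?_ k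
  filter_upwards [Filter.eventually_all.2 fun l => eventually_differentiableAt (hw l) one_le_two]
    with y hy using pd3_sum hy k

lemma lap3_mul (hu : ContDiffAt ℝ 2 u x) (hv : ContDiffAt ℝ 2 v x) :
    lap3 (fun y => u y * v y) x =
      lap3 u x * v x + 2 * ∑ k, pd3 k u x * pd3 k v x + u x * lap3 v x := by
  have du := hu.differentiableAt (by norm_num)
  have dv := hv.differentiableAt (by norm_num)
  simp only [lap3, Finset.sum_mul, Finset.mul_sum, ← Finset.sum_add_distrib]
  refine Finset.sum_congr rfl fun k _ => ?_
  have dku := differentiableAt_pd3 hu k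
  have dkv := differentiableAt_pd3 hv k
  have first_deriv : pd3 k (fun y => u y * v y) =ᶠ[nhds x]
      fun y => pd3 k u y * v y + u y * pd3 k v y := by
    filter_upwards [eventually_differentiableAt hu one_le_two,
      eventually_differentiableAt hv one_le_two] with y hy hy' using pd3_mul hy hy' k
  rw [pd3_congr first_deriv, pd3_add (dku.fun_mul dv) (du.fun_mul dkv), pd3_mul dku dv,
    pd3_mul du dkv]
  ring

lemma lap3_comp (hf : ContDiffAt ℝ 2 f (u x)) (hu : ContDiffAt ℝ 2 u x) :
    lap3 (fun y => f (u y)) x =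
      deriv (deriv f) (u x) * ∑ k, pd3 k u x ^ 2 + deriv f (u x) * lap3 u x := by
  have du := hu.differentiableAt (by norm_num)
  have df' := differentiableAt_deriv hf
  simp only [lap3, Finset.mul_sum, ← Finset.sum_add_distrib]
  refine Finset.sum_congr rfl fun k _ => ?_
  have first_deriv : pd3 k (fun y => f (u y)) =ᶠ[nhds x] fun y => deriv f (u y) * pd3 k u y := by
    filter_upwards [eventually_differentiableAt hu one_le_two,
      hu.continuousAt.eventually (eventually_differentiableAt hf one_le_two)]
      with y hy hfy using pd3_comp hfy hy k
  rw [pd3_congr first_deriv, pd3_mul (u := fun y => deriv f (u y)) (df'.comp x du)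
    (differentiableAt_pd3 hu k), pd3_comp df' du]
  ring

lemma lap3_mul_const (hu : ContDiffAt ℝ 2 u x) (c : ℝ) :
    lap3 (fun y => u y * c) x = lap3 u x * c := by
  simp only [lap3_mul hu contDiffAt_const, pd3_const, lap3_const, mul_zero,
    Finset.sum_const_zero, add_zero]

lemma lap3_coord (i : Fin 3) : lap3 (fun y => y i) x = 0 := by
  have h (k : Fin 3) : pd3 k (fun y => y i) = fun _ => if i = k then 1 else 0 :=
    funext fun _ => pd3_coord i k
  simp only [lap3, h, pd3_const, Finset.sum_const_zero]

lemma lap3_coord_mul_coord (i j : Fin 3) :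
    lap3 (fun y => y i * y j) x = 2 * if i = j then 1 else 0 := by
  rw [lap3_mul (by fun_prop) (by fun_prop), lap3_coord, lap3_coord]
  simp [pd3_coord]

lemma sum_coord_mul_pd3_coord_mul_coord (i j : Fin 3) :
    ∑ k, x k * pd3 k (fun y => y i * y j) x = 2 * (x i * x j) := by
  simp only [pd3_coord_mul_coord, mul_add, Finset.sum_add_distrib, ite_mul, mul_ite, mul_one,
    one_mul, mul_zero, zero_mul, Finset.sum_ite_eq, Finset.mem_univ, if_true]
  ring

lemma sum_sq_eq_rad3_sq (x : Fin 3 → ℝ) : ∑ k, x k ^ 2 = rad3 x ^ 2 :=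
  (Real.sq_sqrt (Finset.sum_nonneg fun _ _ => sq_nonneg _)).symm

lemma rad3_mul_self : (fun y => rad3 y * rad3 y) = fun y : Fin 3 → ℝ => ∑ l, y l * y l := by
  simp only [← sq, sum_sq_eq_rad3_sq]

lemma contDiffAt_rad3 {n : WithTop ℕ∞} (hx : 0 < rad3 x) : ContDiffAt ℝ n rad3 x := by
  have h : ∑ k, x k ^ 2 ≠ 0 := by rw [sum_sq_eq_rad3_sq]; positivity
  exact ContDiffAt.sqrt (by fun_prop) h

lemma pd3_rad3 (hx : 0 < rad3 x) (k : Fin 3) : pd3 k rad3 x = x k / rad3 x := by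
  have dr : DifferentiableAt ℝ rad3 x := (contDiffAt_rad3 hx).differentiableAt one_ne_zero
  have two_r_dr : pd3 k (fun y => rad3 y * rad3 y) x = 2 * x k := by
    rw [rad3_mul_self, pd3_sum fun l => by fun_prop]
    simp only [pd3_coord_mul_coord, ite_mul, mul_ite, mul_one, one_mul, mul_zero, zero_mul,
      Finset.sum_add_distrib, Finset.sum_ite_eq', Finset.mem_univ, if_true]
    ring
  rw [pd3_mul dr dr] at two_r_dr
  rw [eq_div_iff hx.ne']
  linarith

lemma sum_pd3_rad3_sq (hx : 0 < rad3 x) : ∑ k, pd3 k rad3 x ^ 2 = 1 := by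
  simp only [pd3_rad3 hx, div_pow, ← Finset.sum_div, sum_sq_eq_rad3_sq]
  field_simp

lemma lap3_rad3 (hx : 0 < rad3 x) : lap3 rad3 x = 2 / rad3 x := by
  have lap_sq : lap3 (fun y => rad3 y * rad3 y) x = 6 := by
    rw [rad3_mul_self, lap3_sum fun l => by fun_prop]
    simp only [lap3_coord_mul_coord, if_true, Finset.sum_const, Finset.card_univ,
      Fintype.card_fin]
    norm_num
  rw [lap3_mul (contDiffAt_rad3 hx) (contDiffAt_rad3 hx)] at lap_sq
  simp only [← sq, sum_pd3_rad3_sq hx] at lap_sq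
  rw [eq_div_iff hx.ne']
  linarith

lemma pd3_radial (hx : 0 < rad3 x) (hf : DifferentiableAt ℝ f (rad3 x)) (k : Fin 3) :
    pd3 k (fun y => f (rad3 y)) x = deriv f (rad3 x) / rad3 x * x k := by
  rw [pd3_comp hf ((contDiffAt_rad3 hx).differentiableAt one_ne_zero), pd3_rad3 hx]
  ring

lemma lap3_radial (hx : 0 < rad3 x) (hf : ContDiffAt ℝ 2 f (rad3 x)) :
    lap3 (fun y => f (rad3 y)) x =
      deriv (deriv f) (rad3 x) + 2 / rad3 x * deriv f (rad3 x) := by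
  rw [lap3_comp hf (contDiffAt_rad3 hx), sum_pd3_rad3_sq hx, lap3_rad3 hx]
  ring

lemma pd3_radial_mul_coord (hx : 0 < rad3 x) (hf : DifferentiableAt ℝ f (rad3 x))
    (i k : Fin 3) :
    pd3 k (fun y => f (rad3 y) * y i) x =
      deriv f (rad3 x) / rad3 x * (x i * x k) + f (rad3 x) * if i = k then 1 else 0 := by
  have dr := (contDiffAt_rad3 (n := 1) hx).differentiableAt one_ne_zero
  rw [pd3_mul (u := fun y => f (rad3 y)) (hf.comp x dr) (by fun_prop), pd3_radial hx hf,
    pd3_coord]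
  ring

lemma lap3_radial_mul_coord_mul_coord (hx : 0 < rad3 x) (hf : ContDiffAt ℝ 2 f (rad3 x))
    (i j : Fin 3) :
    lap3 (fun y => f (rad3 y) * (y i * y j)) x =
      (deriv (deriv f) (rad3 x) + 6 / rad3 x * deriv f (rad3 x)) * (x i * x j)
        + 2 * f (rad3 x) * if i = j then 1 else 0 := by
  have gradient_term : ∑ k, pd3 k (fun y => f (rad3 y)) x * pd3 k (fun y => y i * y j) x =
      deriv f (rad3 x) / rad3 x * (2 * (x i * x j)) := by
    simp only [pd3_radial hx (hf.differentiableAt two_ne_zero), mul_assoc, ← Finset.mul_sum,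
      sum_coord_mul_pd3_coord_mul_coord]
  rw [lap3_mul (u := fun y => f (rad3 y)) (hf.comp x (contDiffAt_rad3 hx)) (by fun_prop),
    lap3_radial hx hf, gradient_term, lap3_coord_mul_coord]
  ring

lemma hasDerivAt_div_pow {r f' : ℝ} (hr : r ≠ 0) (hf : HasDerivAt f f' r) (n : ℕ) :
    HasDerivAt (fun s => f s / s ^ n) (f' / r ^ n - n * (f r / r ^ (n + 1))) r := by
  refine (hf.fun_div (hasDerivAt_pow n r) (pow_ne_zero n hr)).congr_deriv ?_
  rcases n with _ | n
  · simp
  · simp only [Nat.add_sub_cancel]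
    field_simp
    ring

lemma deriv_deriv_div_pow {r : ℝ} (hr : r ≠ 0) (hf : ContDiffAt ℝ 2 f r) (n : ℕ) :
    deriv (deriv fun s => f s / s ^ n) r =
      deriv (deriv f) r / r ^ n - 2 * n * (deriv f r / r ^ (n + 1))
        + n * (n + 1) * (f r / r ^ (n + 2)) := by
  have df := (hf.differentiableAt two_ne_zero).hasDerivAt
  have df' := (differentiableAt_deriv hf).hasDerivAt
  have first_deriv : deriv (fun s => f s / s ^ n) =ᶠ[nhds r]
      fun s => deriv f s / s ^ n - n * (f s / s ^ (n + 1)) := by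
    filter_upwards [eventually_ne_nhds hr, eventually_differentiableAt hf one_le_two]
      with s hs hfs using (hasDerivAt_div_pow hs hfs.hasDerivAt n).deriv
  have second_deriv := (hasDerivAt_div_pow hr df' n).fun_sub
    ((hasDerivAt_div_pow hr df (n + 1)).const_mul (n : ℝ))
  rw [first_deriv.deriv_eq, second_deriv.deriv]
  push_cast
  ring

lemma contDiffAt_div_pow {r : ℝ} {m : WithTop ℕ∞} (hr : r ≠ 0) (hf : ContDiffAt ℝ m f r)
    (n : ℕ) : ContDiffAt ℝ m (fun s => f s / s ^ n) r :=
  hf.fun_div (by fun_prop) (pow_ne_zero n hr)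

lemma lap3_add_pd3_add_pd3_radial {a b g : ℝ → ℝ} (hx : 0 < rad3 x)
    (ha : ContDiffAt ℝ 2 a (rad3 x)) (hb : ContDiffAt ℝ 2 b (rad3 x))
    (hg : DifferentiableAt ℝ g (rad3 x)) (i j : Fin 3) :
    lap3 (fun y => a (rad3 y) * (if i = j then 1 else 0) - b (rad3 y) * (y i * y j)) x
        + pd3 j (fun y => g (rad3 y) * y i) x + pd3 i (fun y => g (rad3 y) * y j) x
      = (deriv (deriv a) (rad3 x) + 2 / rad3 x * deriv a (rad3 x)
            + 2 * (g (rad3 x) - b (rad3 x))) * (if i = j then 1 else 0)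
        - (deriv (deriv b) (rad3 x) + 6 / rad3 x * deriv b (rad3 x)
            - 2 / rad3 x * deriv g (rad3 x)) * (x i * x j) := by
  have smooth_radial {h : ℝ → ℝ} (hh : ContDiffAt ℝ 2 h (rad3 x)) :
      ContDiffAt ℝ 2 (fun y => h (rad3 y)) x := hh.comp x (contDiffAt_rad3 hx)
  rw [lap3_sub ((smooth_radial ha).mul contDiffAt_const) ((smooth_radial hb).mul (by fun_prop)),
    lap3_mul_const (smooth_radial ha), lap3_radial hx ha, lap3_radial_mul_coord_mul_coord hx hb,
    pd3_radial_mul_coord hx hg, pd3_radial_mul_coord hx hg]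
  simp only [eq_comm (a := j) (b := i)]
  ring

lemma diagonal_coeff_of_profile {ν : ℝ → ℝ} {r : ℝ} (hr : r ≠ 0) (hν : ContDiffAt ℝ 2 ν r)
    (μ : ℝ) :
    deriv (deriv fun s => ν s / s) r + 2 / r * deriv (fun s => ν s / s) r
        + 2 * (ν r / r ^ 3 - (ν r + μ) / r ^ 3)
      = deriv (deriv ν) r / r - 2 * μ / r ^ 3 := by
  have dν := (hν.differentiableAt two_ne_zero).hasDerivAt
  have first_deriv := (hasDerivAt_div_pow hr dν 1).deriv
  have second_deriv := deriv_deriv_div_pow hr hν 1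
  simp only [pow_one] at first_deriv second_deriv
  rw [first_deriv, second_deriv]
  push_cast
  field_simp
  ring

lemma quadratic_coeff_of_profile {ν : ℝ → ℝ} {r : ℝ} (hr : r ≠ 0) (hν : ContDiffAt ℝ 2 ν r)
    (μ : ℝ) :
    deriv (deriv fun s => (ν s + μ) / s ^ 3) r + 6 / r * deriv (fun s => (ν s + μ) / s ^ 3) r
        - 2 / r * deriv (fun s => ν s / s ^ 3) r
      = deriv (deriv ν) r / r ^ 3 - 2 * deriv ν r / r ^ 4 - 6 * μ / r ^ 5 := by
  have dν := (hν.differentiableAt two_ne_zero).hasDerivAt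
  rw [deriv_deriv_div_pow hr (hν.add contDiffAt_const) 3,
    (hasDerivAt_div_pow hr (dν.add_const μ) 3).deriv, (hasDerivAt_div_pow hr dν 3).deriv,
    deriv_add_const']
  push_cast
  field_simp
  ring

lemma lap3_add_pd3_add_pd3_of_profile {ν : ℝ → ℝ} (hx : 0 < rad3 x)
    (hν : ContDiffAt ℝ 2 ν (rad3 x)) (μ : ℝ) (i j : Fin 3) :
    lap3 (fun y => ν (rad3 y) / rad3 y * (if i = j then 1 else 0)
          - (ν (rad3 y) + μ) / rad3 y ^ 3 * (y i * y j)) x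
        + pd3 j (fun y => ν (rad3 y) / rad3 y ^ 3 * y i) x
        + pd3 i (fun y => ν (rad3 y) / rad3 y ^ 3 * y j) x
      = (deriv (deriv ν) (rad3 x) / rad3 x - 2 * μ / rad3 x ^ 3) * (if i = j then 1 else 0)
        - (deriv (deriv ν) (rad3 x) / rad3 x ^ 3 - 2 * deriv ν (rad3 x) / rad3 x ^ 4
            - 6 * μ / rad3 x ^ 5) * (x i * x j) := by
  have hr : rad3 x ≠ 0 := hx.ne'
  have ha : ContDiffAt ℝ 2 (fun s => ν s / s) (rad3 x) := hν.fun_div contDiffAt_id hr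
  have hb := contDiffAt_div_pow hr (hν.add (contDiffAt_const (c := μ))) 3
  have hg := (contDiffAt_div_pow hr hν 3).differentiableAt two_ne_zero
  rw [lap3_add_pd3_add_pd3_radial hx ha hb hg, diagonal_coeff_of_profile hr hν,
    quadratic_coeff_of_profile hr hν]

end

/-- The radial profile `ν(r) = -4M log (r - 2M)` of the approximate mass metric: it is the
only transcendental ingredient of `htil` and `Gtil`. The sign is chosen so that `h̃ᵢⱼ` has
`δᵢⱼ`-coefficient `ν / r`. -/
noncomputable def massProfile (M r : ℝ) : ℝ := -(4 * M * Real.log (r - 2 * M))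

lemma deriv_massProfile (M r : ℝ) : deriv (massProfile M) r = -(4 * M / (r - 2 * M)) := by
  rw [show massProfile M = fun r => -(4 * M * Real.log (r - 2 * M)) from rfl, deriv.fun_neg,
    deriv_const_mul_field, deriv_comp_sub_const (f := Real.log), Real.deriv_log, div_eq_mul_inv]

lemma deriv_deriv_massProfile (M r : ℝ) :
    deriv (deriv (massProfile M)) r = 4 * M / (r - 2 * M) ^ 2 := by
  simp only [funext (deriv_massProfile M), div_eq_mul_inv]
  rw [deriv.fun_neg, deriv_const_mul_field, deriv_comp_sub_const (f := fun s => s⁻¹), deriv_inv,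
    mul_neg, neg_neg]

lemma massProfile_diagonal_coeff {M r : ℝ} (hr : r ≠ 0) (hM : r ≠ 2 * M) :
    deriv (deriv (massProfile M)) r / r - 2 * (2 * M) / r ^ 3
      = 16 * M ^ 2 * (r - M) / (r ^ 3 * (r - 2 * M) ^ 2) := by
  -- `M * 2` is the form in which `field_simp` looks for this denominator.
  have hs : r - M * 2 ≠ 0 := sub_ne_zero.2 (mul_comm 2 M ▸ hM)
  rw [deriv_deriv_massProfile]
  field_simp
  ring

lemma massProfile_quadratic_coeff {M r : ℝ} (hr : r ≠ 0) (hM : r ≠ 2 * M) :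
    deriv (deriv (massProfile M)) r / r ^ 3 - 2 * deriv (massProfile M) r / r ^ 4
        - 6 * (2 * M) / r ^ 5
      = 16 * M ^ 2 * (r - M) / (r ^ 3 * (r - 2 * M) ^ 2) / r ^ 2
        + 16 * M ^ 2 / (r ^ 5 * (r - 2 * M)) := by
  have hs : r - M * 2 ≠ 0 := sub_ne_zero.2 (mul_comm 2 M ▸ hM)
  rw [deriv_deriv_massProfile, deriv_massProfile]
  field_simp
  ring

lemma contDiffAt_massProfile {M r : ℝ} {n : WithTop ℕ∞} (hM : r ≠ 2 * M) :
    ContDiffAt ℝ n (massProfile M) r :=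
  (contDiffAt_const.mul ((contDiffAt_id.sub contDiffAt_const).log (sub_ne_zero.2 hM))).neg

lemma htil_eq_massProfile (M : ℝ) (i j : Fin 3) :
    htil M i j = fun y =>
      massProfile M (rad3 y) / rad3 y * (if i = j then 1 else 0)
        - (massProfile M (rad3 y) + 2 * M) / rad3 y ^ 3 * (y i * y j) := by
  funext y
  simp only [htil, massProfile]
  ring

lemma Gtil_eq_massProfile (M : ℝ) (i : Fin 3) :
    Gtil M i = fun y => massProfile M (rad3 y) / rad3 y ^ 3 * y i := by
  funext y
  simp only [Gtil, massProfile]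
  ring

/-- Exact wave identity for the approximate mass metric: on
`{|x| > 0} ∩ {|x| > 2M}`,
`Δ h̃_{ij} + ∂_j G̃^i + ∂_i G̃^j
  = (16M²(r−M)/(r³(r−2M)²))(δ_{ij} − x_i x_j/r²) − 16M² x_i x_j/(r⁵(r−2M))`. -/
theorem stmt15 (M : ℝ) (i j : Fin 3) (x : Fin 3 → ℝ)
    (h0 : 0 < rad3 x) (hM : 2 * M < rad3 x) :
    (∑ k : Fin 3, pd3 k (fun y => pd3 k (htil M i j) y) x)
        + pd3 j (Gtil M i) x + pd3 i (Gtil M j) x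
      = (16 * M ^ 2 * (rad3 x - M) / ((rad3 x) ^ 3 * (rad3 x - 2 * M) ^ 2))
            * ((if i = j then 1 else 0) - x i * x j / (rad3 x) ^ 2)
          - 16 * M ^ 2 * x i * x j / ((rad3 x) ^ 5 * (rad3 x - 2 * M)) := by
  have hr : rad3 x ≠ 0 := h0.ne'
  have hr2M : rad3 x ≠ 2 * M := hM.ne'
  have identity := lap3_add_pd3_add_pd3_of_profile h0 (contDiffAt_massProfile hr2M) (2 * M) i j
  rw [← htil_eq_massProfile, ← Gtil_eq_massProfile, ← Gtil_eq_massProfile,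
    massProfile_diagonal_coeff hr hr2M, massProfile_quadratic_coeff hr hr2M] at identity
  refine identity.trans ?_
  ring
end
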